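/- arXiv:1704.03702 — 2 statements merged into one kernel-verified Lean document; each statement's English description precedes it below -/
import Mathlib

section
/- Let $K$ be a field, $P=K[X_0,\dots,X_n]$ the standard graded polynomial ring, and $\mathbb X\subseteq\mathbb P^n_K$ a $0$-dimensional subscheme with set of closed points $\operatorname{Supp}(\mathbb X)=\{p_1,\dots,p_s\}$, none of which lies on $\mathcal Z(X_0)$. Let $I_{\mathbb X}\subseteq P$ be its (saturated) homogeneous vanishing ideal, $R=P/I_{\mathbb X}$, and $x_0\in R$ the (non-zerodivisor) residue class of $X_0$. Assume that $\mathbb X$ is locally Gorenstein, i.e. every local ring $\mathcal O_{\mathbb X,p_j}$ is Gorenstein. Let $\deg(\mathbb X)=\sum_j\dim_K\mathcal O_{\mathbb X,p_j}$, and let $r_{\mathbb X}$ be the least $i\ge 0$ such that $\dim_K R_{k}=\deg(\mathbb X)$ for all $k\ge i$. *Separators.* A (possibly empty) subscheme $\mathbb Y\subseteq\mathbb X$ is a maximal $p_j$-subscheme if $\mathcal O_{\mathbb Y,p_k}=\mathcal O_{\mathbb X,p_k}$ for $k\ne j$ and $\deg(\mathbb Y)=\deg(\mathbb X)-\varkappa_j$,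 where $\varkappa_j=\dim_K\kappa(p_j)$ and $\kappa(p_j)$ is the residue field at $p_j$. Let $I_{\mathbb Y/\mathbb X}=I_{\mathbb Y}/I_{\mathbb X}\subseteq R$. For $f\in R_i$ let $f_{p_k}\in\mathcal O_{\mathbb X,p_k}$ be the germ of $f/x_0^i$ at $p_k$. For $a\in\mathcal O_{\mathbb X,p_j}$ let $\mu(a)$ be the least $i\ge 0$ such that some $f\in R_i$ has $f_{p_j}=a$ and $f_{p_k}=0$ for all $k\neq j$. If $\mathbb Y$ is a maximal $p_j$-subscheme, let $s_j\neq 0$ be a socle element of $\mathcal O_{\mathbb X,p_j}$ which generates the kernel of $\mathcal O_{\mathbb X,p_j}\to\mathcal O_{\mathbb Y,p_j}$, let $e_1,\dots,e_{\varkappa_j}\in\mathcal O_{\mathbb X,p_j}$ be elements whose residue classes form a $K$-basis of $\kappa(p_j)$, and put $\mu_{\mathbb Y/\mathbb X}=\max_k\mu(e_ks_j)$, the maximal degree of a minimal separator of $\mathbb Y$ in $\mathbb X$ (it does not depend on the choices of $s_j$ and $e_1,\dots,e_{\varkappa_j}$). Let $\deg_{\mathbb X}(p_j)$ be the minimum of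 the numbers $\mu_{\mathbb Y/\mathbb X}$, where $\mathbb Y$ ranges over the maximal $p_j$-subschemes of $\mathbb X$. The scheme $\mathbb X$ is called a Cayley–Bacharach scheme if $\deg_{\mathbb X}(p_j)\ge r_{\mathbb X}$ for $j=1,\dots,s$. *Dedekind different.* Let $Q^h(R)$ be the localization of $R$ at the set of all homogeneous non-zerodivisors, with its natural $\mathbb Z$-grading, and let $L_0=K[x_0,x_0^{-1}]\subseteq Q^h(R)$. Let $\sigma$ be a homogeneous trace map of degree zero of $Q^h(R)/L_0$, that is, an $L_0$-linear map $\sigma:Q^h(R)\to L_0$, homogeneous of degree zero, such that $\Sigma:Q^h(R)\to\operatorname{Hom}_{L_0}(Q^h(R),L_0)$, $g\mapsto\sigma(g\,\cdot\,)$, is bijective. The Dedekind complementary module $\mathfrak C^\sigma_{\mathbb X}\subseteq Q^h(R)$ is the set of all $\Sigma^{-1}(\varphi\otimes\mathrm{id}_{L_0})$ with $\varphi\in\operatorname{Hom}_{K[x_0]}(R,K[x_0])$, where $\varphi\otimes\mathrm{id}_{L_0}$ is the $L_0$-linear extension of $\varphi$ to $Q^h(R)=R\otimes_{K[x_0]}L_0$,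 and the Dedekind different is $\delta^\sigma_{\mathbb X}=\{f\in Q^h(R)\mid f\cdot\mathfrak C^\sigma_{\mathbb X}\subseteq R\}$. Then $\mathbb X$ is a Cayley–Bacharach scheme if and only if, for every $p_j\in\operatorname{Supp}(\mathbb X)$, every maximal $p_j$-subscheme $\mathbb Y\subseteq\mathbb X$ satisfies $$x_0^{r_{\mathbb X}-1}\,(I_{\mathbb Y/\mathbb X})_{r_{\mathbb X}}\not\subseteq(\delta^\sigma_{\mathbb X})_{2r_{\mathbb X}-1}.$$ (The products are taken in $Q^h(R)$, so that the condition also makes sense for $r_{\mathbb X}=0$.) -/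
open MvPolynomial

attribute [local instance] MvPolynomial.gradedAlgebra

noncomputable section

universe u

/-- A closed subscheme of `ℙⁿ_K` (possibly empty), given by its homogeneous vanishing ideal in
`P = K[X_0, …, X_n]`: a homogeneous ideal `I` which is saturated, i.e. `I : ⟨X_0, …, X_n⟩ = I`. -/
structure ProjSubscheme (K : Type u) [Field K] (n : ℕ) where
  /-- the homogeneous vanishing ideal -/
  ideal : Ideal (MvPolynomial (Fin (n + 1)) K)
  homogeneous : ideal.IsHomogeneous (homogeneousSubmodule (Fin (n + 1)) K)
  saturated : ∀ F, (∀ i, X i * F ∈ ideal) → F ∈ ideal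

namespace ProjSubscheme

variable {K : Type u} [Field K] {n : ℕ} (Y : ProjSubscheme K n)

/-- The homogeneous coordinate ring `R = P / I`. -/
abbrev R : Type u := MvPolynomial (Fin (n + 1)) K ⧸ Y.ideal

/-- The homogeneous component `R_i`. -/
def comp (i : ℕ) : Submodule K Y.R :=
  (homogeneousSubmodule (Fin (n + 1)) K i).map (Ideal.Quotient.mkₐ K Y.ideal).toLinearMap

/-- The residue class `x_0` of `X_0` in `R`. -/
def x0 : Y.R := Ideal.Quotient.mk Y.ideal (X 0)

/-- The ring `R / ⟨x_0 - 1⟩ = P / (I + ⟨X_0 - 1⟩)` (dehomogenization).  It is the affine coordinate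
ring of the part of the scheme which lies in the affine chart `D_+(X_0) = 𝔸ⁿ_K`.  If no point of
the scheme lies on `Z(X_0)`, then the scheme is the spectrum of this ring. -/
abbrev Gamma : Type u :=
  MvPolynomial (Fin (n + 1)) K ⧸ (Y.ideal ⊔ Ideal.span {X 0 - 1})

/-- The closed points of the scheme (in the chart `D_+(X_0)`). -/
abbrev Pt : Type u := MaximalSpectrum Y.Gamma

/-- The local ring `𝒪_{Y,p}`. -/
abbrev O (p : Y.Pt) : Type u := Localization.AtPrime p.asIdeal

/-- The residue field `κ(p)`. -/
abbrev kappa (p : Y.Pt) : Type u := IsLocalRing.ResidueField (Y.O p)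

/-- The canonical map `R → R / ⟨x_0 - 1⟩`. -/
def dehom : Y.R →+* Y.Gamma := Ideal.Quotient.factor le_sup_left

/-- For `f ∈ R_i`, the germ `f_p ∈ 𝒪_{Y,p}` of `f` at `p`, i.e. of the function `f / x_0^i`. -/
def germ (p : Y.Pt) : Y.R →+* Y.O p := (algebraMap Y.Gamma (Y.O p)).comp Y.dehom

/-- The degree `∑_p dim_K 𝒪_{Y,p}`. -/
def deg : ℕ := ∑ᶠ p : Y.Pt, Module.finrank K (Y.O p)

end ProjSubscheme

/-- A 0-dimensional subscheme of `ℙⁿ_K` such that no point of its support lies on `Z(X_0)`.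
(A projective scheme has dimension 0 iff its homogeneous coordinate ring has Krull dimension 1;
its points are the homogeneous primes of `P` which contain `I` and do not contain `P_+`.) -/
structure ZeroDimScheme (K : Type u) [Field K] (n : ℕ) extends ProjSubscheme K n where
  zero_dim : ringKrullDim (MvPolynomial (Fin (n + 1)) K ⧸ ideal) = 1
  not_at_infinity : ∀ p : ProjectiveSpectrum (homogeneousSubmodule (Fin (n + 1)) K),
    ideal ≤ p.asHomogeneousIdeal.toIdeal → X 0 ∉ p.asHomogeneousIdeal.toIdeal

namespace ProjSubscheme

variable {K : Type u} [Field K] {n : ℕ} (Y : ProjSubscheme K n)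

lemma one_mem_comp : (1 : Y.R) ∈ Y.comp 0 :=
  ⟨1, isHomogeneous_one _ _, map_one (Ideal.Quotient.mkₐ K Y.ideal)⟩

lemma mul_mem_comp {i j : ℕ} {f g : Y.R} (hf : f ∈ Y.comp i) (hg : g ∈ Y.comp j) :
    f * g ∈ Y.comp (i + j) := by
  obtain ⟨F, hF, rfl⟩ := hf
  obtain ⟨G, hG, rfl⟩ := hg
  exact ⟨F * G, IsHomogeneous.mul hF hG, map_mul (Ideal.Quotient.mkₐ K Y.ideal) F G⟩

lemma mem_of_pow_le (N : ℕ) : ∀ F : MvPolynomial (Fin (n + 1)) K,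
    (∀ G ∈ (Ideal.span (Set.range (X : Fin (n + 1) → MvPolynomial (Fin (n + 1)) K))) ^ N,
      G * F ∈ Y.ideal) → F ∈ Y.ideal := by
  induction N with
  | zero => intro F h; simpa using h 1 (by simp)
  | succ N ih =>
    intro F h
    refine Y.saturated F fun i => ih _ fun G hG => ?_
    rw [← mul_assoc]
    refine h _ ?_
    rw [pow_succ]
    exact Ideal.mul_mem_mul hG (Ideal.subset_span ⟨i, rfl⟩)

/-- The multiplicative set of all homogeneous non-zerodivisors of `R`. -/
def homNZD : Submonoid Y.R where
  carrier := {f | f ∈ nonZeroDivisors Y.R ∧ ∃ i, f ∈ Y.comp i}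
  one_mem' := ⟨one_mem _, 0, Y.one_mem_comp⟩
  mul_mem' := by
    rintro f g ⟨hf, i, hi⟩ ⟨hg, j, hj⟩
    exact ⟨mul_mem hf hg, i + j, Y.mul_mem_comp hi hj⟩

end ProjSubscheme

namespace ZeroDimScheme

variable {K : Type u} [Field K] {n : ℕ} (S : ZeroDimScheme K n)

lemma homogeneous_mem_of_X0_mul_mem {d : ℕ} {F : MvPolynomial (Fin (n + 1)) K}
    (hF : F.IsHomogeneous d) (h : X 0 * F ∈ S.ideal) : F ∈ S.ideal := by
  classical
  have hJ : ∀ G, G ∈ S.ideal.colon {F} ↔ G * F ∈ S.ideal := fun G => by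
    simp [Submodule.mem_colon_singleton]
  have hhom : (S.ideal.colon {F}).IsHomogeneous (homogeneousSubmodule (Fin (n + 1)) K) := by
    intro i G hG
    rw [hJ] at hG ⊢
    have h1 := S.homogeneous (i + d) hG
    rwa [DirectSum.coe_decompose_mul_add_of_right_mem _ hF] at h1
  have hle : Ideal.span (Set.range X) ≤ (S.ideal.colon {F}).radical := by
    rw [hhom.radical_eq]
    refine le_sInf ?_
    rintro q ⟨hq, hJq, hprime⟩
    have hIq : S.ideal ≤ q := fun G hG => hJq ((hJ G).2 (S.ideal.mul_mem_right _ hG))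
    have h0q : X 0 ∈ q := hJq ((hJ _).2 h)
    by_cases hirr : HomogeneousIdeal.irrelevant (homogeneousSubmodule (Fin (n + 1)) K) ≤ ⟨q, hq⟩
    · refine Ideal.span_le.2 ?_
      rintro _ ⟨i, rfl⟩
      exact hirr (HomogeneousIdeal.mem_irrelevant_of_mem _ one_pos (isHomogeneous_X K i))
    · exact absurd h0q (S.not_at_infinity ⟨⟨q, hq⟩, hprime, hirr⟩ hIq)
  obtain ⟨N, hN⟩ := Ideal.exists_pow_le_of_le_radical_of_fg hle
    (IsNoetherian.noetherian _)
  exact S.mem_of_pow_le N F fun G hG => (hJ G).1 (hN hG)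

lemma mem_of_X0_mul_mem {F : MvPolynomial (Fin (n + 1)) K} (h : X 0 * F ∈ S.ideal) :
    F ∈ S.ideal := by
  classical
  rw [← DirectSum.sum_support_decompose (homogeneousSubmodule (Fin (n + 1)) K) F]
  refine Ideal.sum_mem _ fun i _ => ?_
  refine S.homogeneous_mem_of_X0_mul_mem (d := i)
    (DirectSum.decompose (homogeneousSubmodule (Fin (n + 1)) K) F i).2 ?_
  have h1 := S.homogeneous (1 + i) h
  rwa [DirectSum.coe_decompose_mul_add_of_left_mem _ (isHomogeneous_X K 0)] at h1

/-- `x_0` is a non-zerodivisor of `R`. -/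
lemma x0_mem_homNZD : S.x0 ∈ S.homNZD := by
  refine ⟨mem_nonZeroDivisors_iff_left.2 fun f hf => ?_, 1, X 0, isHomogeneous_X K 0, rfl⟩
  obtain ⟨F, rfl⟩ := Ideal.Quotient.mk_surjective f
  exact Ideal.Quotient.eq_zero_iff_mem.2
    (S.mem_of_X0_mul_mem (Ideal.Quotient.eq_zero_iff_mem.1 hf))

/-- `𝕏` is locally Gorenstein: every local ring `𝒪_{𝕏,p}` has finite injective dimension as a
module over itself. -/
def IsLocallyGorenstein : Prop :=
  ∀ p : S.Pt, ∃ d : ℕ,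
    CategoryTheory.HasInjectiveDimensionLE (ModuleCat.of (S.O p) (S.O p)) d

/-- The Hilbert function of `𝕏` (in degrees `i ≥ 0`). -/
def HF (i : ℕ) : ℕ := Module.finrank K (S.comp i)

/-- The regularity index `r_𝕏`. -/
def rX : ℕ := sInf {r : ℕ | ∀ i, r ≤ i → S.HF i = S.deg}

/-! ### Maximal `p`-subschemes and minimal separators -/

/-- For a subscheme `𝕐 ⊆ 𝕏`: the ideal `I_{𝕐/𝕏} = I_𝕐 / I_𝕏` of `𝕐` in `R`. -/
def relIdeal (Y : ProjSubscheme K n) : Ideal S.R :=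
  Y.ideal.map (Ideal.Quotient.mk S.ideal)

/-- For a subscheme `𝕐 ⊆ 𝕏`: the kernel of the canonical epimorphism `𝒪_{𝕏,p} → 𝒪_{𝕐,p}`,
i.e. the ideal of `𝒪_{𝕏,p}` generated by `I_{𝕐/𝕏}`. -/
def stalkKer (Y : ProjSubscheme K n) (p : S.Pt) : Ideal (S.O p) :=
  (S.relIdeal Y).map (S.germ p)

/-- `𝕐` is a maximal `p`-subscheme of `𝕏`. -/
structure IsMaximalSubscheme (p : S.Pt) (Y : ProjSubscheme K n) : Prop where
  /-- `𝕐 ⊆ 𝕏` -/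
  le : S.ideal ≤ Y.ideal
  /-- `𝒪_{𝕐,q} = 𝒪_{𝕏,q}` for all `q ≠ p` -/
  stalk_eq : ∀ q : S.Pt, q ≠ p → S.stalkKer Y q = ⊥
  /-- `deg 𝕐 = deg 𝕏 - dim_K κ(p)` -/
  deg_eq : Y.deg + Module.finrank K (S.kappa p) = S.deg

/-- `s` is a socle element of `𝒪_{𝕏,p}` which corresponds to `𝕐`. -/
structure IsSocleElement (p : S.Pt) (Y : ProjSubscheme K n) (s : S.O p) : Prop where
  ne_zero : s ≠ 0
  socle : ∀ b ∈ IsLocalRing.maximalIdeal (S.O p), b * s = 0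
  span_eq : S.stalkKer Y p = Ideal.span {s}

/-- The residue classes of `e_1, …, e_ϰ ∈ 𝒪_{𝕏,p}` form a `K`-basis of `κ(p)`. -/
def IsResidueBasis (p : S.Pt) (e : Fin (Module.finrank K (S.kappa p)) → S.O p) : Prop :=
  ∃ b : Module.Basis (Fin (Module.finrank K (S.kappa p))) K (S.kappa p),
    ∀ k, b k = IsLocalRing.residue (S.O p) (e k)

/-- `μ(a)` for `a ∈ 𝒪_{𝕏,p}`: the least `i` such that there is an element `f ∈ R_i` whose germ
is `a` at `p` and `0` at all other points of the support. -/
def mu (p : S.Pt) (a : S.O p) : ℕ :=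
  sInf {i : ℕ | ∃ f ∈ S.comp i, S.germ p f = a ∧ ∀ q : S.Pt, q ≠ p → S.germ q f = 0}

/-- The maximal degree `μ_{𝕐/𝕏}` of a minimal separator of `𝕐` in `𝕏`.  The minimal separators
with respect to `s` and `e_1, …, e_ϰ` have the degrees `μ(e_1 s), …, μ(e_ϰ s)`. -/
def muY (p : S.Pt) (Y : ProjSubscheme K n) : ℕ :=
  sSup {m : ℕ | ∃ s e k, S.IsSocleElement p Y s ∧ S.IsResidueBasis p e ∧ m = S.mu p (e k * s)}

/-- The degree of `p` in `𝕏`: the minimum of all `μ_{𝕐/𝕏}`, `𝕐` a maximal `p`-subscheme. -/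
def degP (p : S.Pt) : ℕ∞ :=
  ⨅ (Y : ProjSubscheme K n) (_ : S.IsMaximalSubscheme p Y), (S.muY p Y : ℕ∞)

/-- The Cayley–Bacharach property of degree `d`: every point `p` has degree at least `d + 1`.
(Degrees of points are `≥ 0`, so this is no condition if `d + 1 ≤ 0`.) -/
def CBP (d : ℤ) : Prop := ∀ p : S.Pt, ((d + 1).toNat : ℕ∞) ≤ S.degP p

/-- `𝕏` is a Cayley–Bacharach scheme. -/
def IsCayleyBacharach : Prop := S.CBP ((S.rX : ℤ) - 1)

/-! ### The Dedekind different -/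

/-- The homogeneous ring of quotients `Q^h(R)`. -/
abbrev Q : Type u := Localization S.homNZD

/-- The homogeneous component of degree `i` of `Q^h(R)`. -/
def compQ (i : ℤ) : Set S.Q :=
  {q | ∃ (a b : ℕ) (f : S.R) (g : S.homNZD),
    f ∈ S.comp a ∧ (g : S.R) ∈ S.comp b ∧ (a : ℤ) - b = i ∧ q = Localization.mk f g}

/-- `x_0` as a unit of `Q^h(R)`. -/
def x0Q : S.Qˣ :=
  (IsLocalization.map_units S.Q (⟨S.x0, S.x0_mem_homNZD⟩ : S.homNZD)).unit

/-- `K[x_0] ⊆ R`. -/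
abbrev Kx0 : Subalgebra K S.R := Algebra.adjoin K {S.x0}

/-- `L_0 = K[x_0, x_0⁻¹] ⊆ Q^h(R)`. -/
abbrev L0 : Subalgebra K S.Q := Algebra.adjoin K {(S.x0Q : S.Q), ((S.x0Q⁻¹ : S.Qˣ) : S.Q)}

/-- `Σ : Q^h(R) → Hom_{L_0}(Q^h(R), L_0)`, `g ↦ g • σ = (q ↦ σ (g q))`. -/
def Sig (σ : S.Q →ₗ[S.L0] S.L0) (g : S.Q) : S.Q →ₗ[S.L0] S.L0 where
  toFun q := σ (g * q)
  map_add' q q' := by rw [mul_add, map_add]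
  map_smul' c q := by
    have h : g * c • q = c • (g * q) := by
      show g * ((c : S.Q) * q) = (c : S.Q) * (g * q)
      ring
    rw [h, map_smul, RingHom.id_apply]

/-- `σ` is a homogeneous trace map of degree zero of `Q^h(R)/L_0`: it is homogeneous of degree
zero, and `{σ}` is a `Q^h(R)`-basis of `Hom_{L_0}(Q^h(R), L_0)`. -/
structure IsHomogeneousTraceMap (σ : S.Q →ₗ[S.L0] S.L0) : Prop where
  degree_zero : ∀ (i : ℤ), ∀ q ∈ S.compQ i, (σ q : S.Q) ∈ S.compQ i
  basis : Function.Bijective (S.Sig σ)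

/-- `ψ = φ ⊗ id_{L_0}` under `Q^h(R) = R ⊗_{K[x_0]} L_0`, i.e. the `L_0`-linear map `ψ` extends
the `K[x_0]`-linear map `φ`. -/
def IsExtension (φ : S.R →ₗ[S.Kx0] S.Kx0) (ψ : S.Q →ₗ[S.L0] S.L0) : Prop :=
  ∀ f : S.R, (ψ (algebraMap S.R S.Q f) : S.Q) = algebraMap S.R S.Q (φ f : S.R)

/-- The Dedekind complementary module `𝔠^σ_𝕏`: the set of all `Σ⁻¹(φ ⊗ id_{L_0})` with
`φ ∈ ω_R(1) = Hom_{K[x_0]}(R, K[x_0])`. -/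
def complementary (σ : S.Q →ₗ[S.L0] S.L0) : Set S.Q :=
  {g | ∃ φ : S.R →ₗ[S.Kx0] S.Kx0, S.IsExtension φ (S.Sig σ g)}

/-- The Dedekind different `δ^σ_𝕏`. -/
def different (σ : S.Q →ₗ[S.L0] S.L0) : Set S.Q :=
  {f | ∀ g ∈ S.complementary σ, f * g ∈ Set.range (algebraMap S.R S.Q)}

end ZeroDimScheme

end

/-!
Let `Γ = R / ⟨x_0 - 1⟩`, filtered by the images `F_i` of the `R_i`, and `r = r_𝕏`.  Then `R` is the
Rees algebra `⨁ F_i T^i`, and `Q^h(R) = Γ[T;T⁻¹]`.  A homogeneous trace map `σ` is the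
coefficientwise extension of a linear form `τ` on `Γ` for which `(a, b) ↦ τ (a b)` is
nondegenerate.  An element of `Γ[T;T⁻¹]` lies in the complementary module iff its coefficient of
`T^m` is orthogonal to `F_{-1-m}` for all `m`, and therefore `b T^(2r-1)` lies in the different iff
`b F_{r-1}^⊥ ⊆ F_{r-1}`.

The ideal `I` of a maximal `p`-subscheme `𝕐` in `Γ` is a minimal ideal, so `I a` is `0` or `I` for
every `a ∈ F_{r-1}^⊥`.  If it is always `0`, then `I ⊆ F_{r-1}^⊥⊥ = F_{r-1}`.  Hence
`I F_{r-1}^⊥ ⊆ F_{r-1}` is equivalent to `I ⊆ F_{r-1}`.  The latter is the condition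
`μ_{𝕐/𝕏} ≤ r - 1`, because the minimal separators of degree `i` lie in `I ∩ F_i`, and the minimal
separators span `I` over `K`.
-/

noncomputable section

open scoped LaurentPolynomial

open LaurentPolynomial (T)

section HomogeneousPolynomials

variable {ι A : Type*} [CommSemiring A]

lemma aeval_mul_const_of_isHomogeneous {B : Type*} [CommSemiring B] [Algebra A B] (b : ι → B)
    (t : B) {F : MvPolynomial ι A} {d : ℕ} (hF : F.IsHomogeneous d) :
    aeval (fun i => b i * t) F = aeval b F * t ^ d := by
  simp only [aeval_def, eval₂_eq, mul_pow, Finset.prod_mul_distrib, Finset.prod_pow_eq_pow_sum,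
    Finset.sum_mul]
  refine Finset.sum_congr rfl fun m hm => ?_
  rw [hF.degree_eq_sum_deg_support hm, mul_assoc]

lemma homogeneousComponent_add_one_mul_X (d : ℕ) (F : MvPolynomial ι A) (j : ι) :
    homogeneousComponent (d + 1) (F * X j) = homogeneousComponent d F * X j := by
  classical
  have h := DirectSum.coe_decompose_mul_add_of_right_mem (homogeneousSubmodule ι A) (i := d)
    (a := F) (isHomogeneous_X A j)
  exact (decomposition.decompose'_apply (F * X j) (d + 1)).symm.trans
    (h.trans (congrArg (· * X j) (decomposition.decompose'_apply F d)))

lemma mem_pow_idealOfVars_of_isHomogeneous {F : MvPolynomial ι A} {d N : ℕ}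
    (hF : F.IsHomogeneous d) (hN : N ≤ d) : F ∈ idealOfVars ι A ^ N := by
  refine (mem_pow_idealOfVars_iff N F).2 fun m hm => hN.trans ?_
  exact (hF.degree_eq_sum_deg_support hm).le

end HomogeneousPolynomials

section LaurentCoefficients

variable {A : Type*} [CommRing A]

lemma laurentC_smul {B : Type*} [CommSemiring B] [Algebra B A] (b : B) (a : A) :
    (LaurentPolynomial.C (b • a) : A[T;T⁻¹]) = b • LaurentPolynomial.C a :=
  map_smul (IsScalarTower.toAlgHom B A A[T;T⁻¹]) b a

lemma coeff_C_mul_T (a : A) (i k : ℤ) :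
    (LaurentPolynomial.C a * T i : A[T;T⁻¹]).coeff k = if i = k then a else 0 := by
  rw [← LaurentPolynomial.single_eq_C_mul_T]
  exact Finsupp.single_apply

lemma C_mul_T_mul_C_mul_T (a b : A) (i j : ℤ) :
    LaurentPolynomial.C a * T i * (LaurentPolynomial.C b * T j) =
      (LaurentPolynomial.C (a * b) * T (i + j) : A[T;T⁻¹]) := by
  rw [mul_mul_mul_comm, ← map_mul, ← LaurentPolynomial.T_add]

lemma coeff_C_mul_T_mul (a : A) (i : ℤ) (p : A[T;T⁻¹]) (k : ℤ) :
    (LaurentPolynomial.C a * T i * p).coeff k = a * p.coeff (k - i) := by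
  rw [← LaurentPolynomial.single_eq_C_mul_T]
  exact AddMonoidAlgebra.coeff_single_mul_eq_mul_coeff (k - i) fun m _ => by omega

lemma sum_C_coeff_mul_T (p : A[T;T⁻¹]) :
    ∑ k ∈ p.coeff.support, LaurentPolynomial.C (p.coeff k) * T k = p := by
  ext j
  simp [coeff_C_mul_T]

end LaurentCoefficients

namespace ProjSubscheme

variable {K : Type*} [Field K] {n : ℕ} (Y : ProjSubscheme K n)

lemma comp_induction {motive : Y.R → Prop} (add : ∀ f g, motive f → motive g → motive (f + g))
    (zero : motive 0) (mem : ∀ i, ∀ f ∈ Y.comp i, motive f) (f : Y.R) : motive f := by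
  obtain ⟨F, rfl⟩ := Ideal.Quotient.mk_surjective f
  rw [← sum_homogeneousComponent F, map_sum]
  exact Finset.sum_induction _ _ add zero fun d _ =>
    mem d _ ⟨_, homogeneousComponent_isHomogeneous d F, rfl⟩

lemma x0_mem_comp : Y.x0 ∈ Y.comp 1 := ⟨X 0, isHomogeneous_X K 0, rfl⟩

lemma x0_pow_mem_comp (k : ℕ) : Y.x0 ^ k ∈ Y.comp k :=
  ⟨X 0 ^ k, isHomogeneous_X_pow _ _, map_pow (Ideal.Quotient.mk Y.ideal) _ _⟩

instance finite_comp (i : ℕ) : Module.Finite K (Y.comp i) :=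
  Module.Finite.iff_fg.2 ((homogeneousSubmodule_fg _ _ i).map _)

section Rescale

variable {A : Type*} [CommRing A] [Algebra K A] (φ : Y.R →ₐ[K] A) (t : A)

lemma aeval_mul_const_mk_X {F : MvPolynomial (Fin (n + 1)) K} {d : ℕ} (hF : F.IsHomogeneous d) :
    aeval (fun i => φ (Ideal.Quotient.mk Y.ideal (X i)) * t) F =
      φ (Ideal.Quotient.mk Y.ideal F) * t ^ d := by
  rw [aeval_mul_const_of_isHomogeneous _ _ hF]
  congr 1
  exact (DFunLike.congr_fun (aeval_unique (φ.comp (Ideal.Quotient.mkₐ K Y.ideal))) F).symm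

/-- The twist of a homomorphism `φ` on the graded ring `R` by an element `t` of the target: it is
`f ↦ φ f * t ^ i` on `R_i`. -/
def rescale : Y.R →ₐ[K] A :=
  Ideal.Quotient.liftₐ Y.ideal (aeval fun i => φ (Ideal.Quotient.mk Y.ideal (X i)) * t) (by
    intro F hF
    rw [← sum_homogeneousComponent F, map_sum]
    refine Finset.sum_eq_zero fun d _ => ?_
    rw [Y.aeval_mul_const_mk_X φ t (homogeneousComponent_isHomogeneous d F),
      Ideal.Quotient.eq_zero_iff_mem.2 (homogeneousComponent_mem_of_mem Y.homogeneous hF d),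
      map_zero, zero_mul])

lemma rescale_of_mem {i : ℕ} {f : Y.R} (hf : f ∈ Y.comp i) : Y.rescale φ t f = φ f * t ^ i := by
  obtain ⟨F, hF, rfl⟩ := hf
  exact Y.aeval_mul_const_mk_X φ t hF

end Rescale

section Dehomogenization

/-- The dehomogenization `R → R / ⟨x_0 - 1⟩` as a homomorphism of `K`-algebras. -/
def dehomₐ : Y.R →ₐ[K] Y.Gamma := Ideal.Quotient.factorₐ K le_sup_left

lemma dehom_surjective : Function.Surjective Y.dehom := Ideal.Quotient.factor_surjective _

@[simp]
lemma dehom_x0 : Y.dehom Y.x0 = 1 :=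
  (Ideal.Quotient.mk_eq_mk_iff_sub_mem _ _).2
    (Ideal.mem_sup_right (Ideal.mem_span_singleton_self _))

lemma ker_dehom : RingHom.ker Y.dehom = Ideal.span {Y.x0 - 1} := by
  rw [dehom, Ideal.Quotient.factor_ker, Ideal.map_sup, Ideal.map_quotient_self, bot_sup_eq,
    Ideal.map_span, Set.image_singleton, map_sub, map_one, x0]

/-- The image `F_i` of `R_i` in `R / ⟨x_0 - 1⟩`, with `F_i = 0` for `i < 0`. -/
def filtration (i : ℤ) : Submodule K Y.Gamma :=
  if 0 ≤ i then (Y.comp i.toNat).map Y.dehomₐ.toLinearMap else ⊥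

lemma filtration_natCast (i : ℕ) :
    Y.filtration i = (Y.comp i).map Y.dehomₐ.toLinearMap := by
  simp [filtration]

lemma filtration_of_neg {i : ℤ} (hi : i < 0) : Y.filtration i = ⊥ := by
  simp [filtration, hi]

lemma mem_filtration_natCast {i : ℕ} {a : Y.Gamma} :
    a ∈ Y.filtration i ↔ ∃ f ∈ Y.comp i, Y.dehom f = a := by
  rw [filtration_natCast]; rfl

lemma filtration_mono : Monotone Y.filtration := by
  intro i j hij
  rcases lt_or_ge i 0 with hi | hi
  · rw [Y.filtration_of_neg hi]; exact bot_le
  · lift i to ℕ using hi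
    obtain ⟨k, rfl⟩ := Int.exists_add_of_le hij
    intro a ha
    obtain ⟨f, hf, rfl⟩ := Y.mem_filtration_natCast.1 ha
    exact Y.mem_filtration_natCast.2
      ⟨f * Y.x0 ^ k, Y.mul_mem_comp hf (Y.x0_pow_mem_comp k), by simp⟩

end Dehomogenization

section AvoidsInfinity

/-- No point of the scheme lies on the hyperplane `Z(X_0)`.  Unlike `ZeroDimScheme` this allows the
empty scheme, and it passes to subschemes. -/
def AvoidsInfinity : Prop :=
  ∀ p : ProjectiveSpectrum (homogeneousSubmodule (Fin (n + 1)) K),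
    Y.ideal ≤ p.asHomogeneousIdeal.toIdeal → X 0 ∉ p.asHomogeneousIdeal.toIdeal

variable {Y}

lemma AvoidsInfinity.mono (hY : Y.AvoidsInfinity) {Z : ProjSubscheme K n}
    (h : Y.ideal ≤ Z.ideal) : Z.AvoidsInfinity :=
  fun p hp => hY p (h.trans hp)

lemma AvoidsInfinity.idealOfVars_le_radical (hY : Y.AvoidsInfinity) :
    idealOfVars (Fin (n + 1)) K ≤ (Y.ideal ⊔ Ideal.span {X 0}).radical := by
  have hhom : (Y.ideal ⊔ Ideal.span {X 0}).IsHomogeneous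
      (homogeneousSubmodule (Fin (n + 1)) K) := by
    refine Y.homogeneous.sup (Ideal.homogeneous_span _ _ ?_)
    rintro _ rfl
    exact ⟨1, isHomogeneous_X K 0⟩
  rw [hhom.radical_eq]
  refine le_sInf ?_
  rintro q ⟨hq, hle, hprime⟩
  by_cases hirr : HomogeneousIdeal.irrelevant (homogeneousSubmodule (Fin (n + 1)) K) ≤ ⟨q, hq⟩
  · refine Ideal.span_le.2 ?_
    rintro _ ⟨i, rfl⟩
    exact hirr (HomogeneousIdeal.mem_irrelevant_of_mem _ one_pos (isHomogeneous_X K i))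
  · exact absurd (hle (Ideal.mem_sup_right (Ideal.mem_span_singleton_self _)))
      (hY ⟨⟨q, hq⟩, hprime, hirr⟩ (le_sup_left.trans hle))

lemma AvoidsInfinity.exists_pow_idealOfVars_le (hY : Y.AvoidsInfinity) :
    ∃ N, idealOfVars (Fin (n + 1)) K ^ N ≤ Y.ideal ⊔ Ideal.span {X 0} :=
  Ideal.exists_pow_le_of_le_radical_of_fg hY.idealOfVars_le_radical (idealOfVars_fg _ _)

lemma AvoidsInfinity.x0_mem_nonZeroDivisors (hY : Y.AvoidsInfinity) :
    Y.x0 ∈ nonZeroDivisors Y.R := by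
  refine mem_nonZeroDivisors_iff_left.2 fun f hf => ?_
  obtain ⟨F, rfl⟩ := Ideal.Quotient.mk_surjective f
  have hXF : X 0 * F ∈ Y.ideal := Ideal.Quotient.eq_zero_iff_mem.1 hf
  obtain ⟨N, hN⟩ := hY.exists_pow_idealOfVars_le
  refine Ideal.Quotient.eq_zero_iff_mem.2 (Y.mem_of_pow_le N F fun G hG => ?_)
  obtain ⟨H, hH, _, hB, rfl⟩ := Submodule.mem_sup.1 (hN hG)
  obtain ⟨B, rfl⟩ := Ideal.mem_span_singleton'.1 hB
  have hsum : (H + B * X 0) * F = F * H + B * (X 0 * F) := by ring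
  rw [hsum]
  exact add_mem (Ideal.mul_mem_left _ _ hH) (Ideal.mul_mem_left _ _ hXF)

/- On `R_i` the map `f ↦ f / x_0^i` into `R[x_0⁻¹]` is injective, and it factors through the
dehomogenization. -/
lemma AvoidsInfinity.dehom_injOn (hY : Y.AvoidsInfinity) (i : ℕ) :
    Set.InjOn Y.dehom (Y.comp i) := by
  refine (Set.injOn_iff_map_eq_zero Y.dehom (Y.comp i)).2 fun f hf h => ?_
  let A := Localization.Away Y.x0
  let v : A := IsLocalization.Away.invSelf Y.x0
  have hv : algebraMap Y.R A Y.x0 * v = 1 := IsLocalization.Away.mul_invSelf Y.x0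
  let ψ : Y.R →ₐ[K] A := Y.rescale (IsScalarTower.toAlgHom K Y.R A) v
  have hψ_ker : RingHom.ker Y.dehom ≤ RingHom.ker ψ := by
    rw [ker_dehom, Ideal.span_singleton_le_iff_mem, RingHom.mem_ker, map_sub, map_one, sub_eq_zero]
    exact (Y.rescale_of_mem _ v Y.x0_mem_comp).trans (by rw [pow_one]; exact hv)
  have hfv : algebraMap Y.R A f * v ^ i = 0 := (Y.rescale_of_mem _ v hf).symm.trans (hψ_ker h)
  have hf0 : algebraMap Y.R A f = 0 :=
    ((IsUnit.of_mul_eq_one_right _ hv).pow i).mul_left_eq_zero.1 hfv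
  exact (IsLocalization.to_map_eq_zero_iff A
    (Submonoid.powers_le.2 hY.x0_mem_nonZeroDivisors)).1 hf0

lemma AvoidsInfinity.finrank_comp (hY : Y.AvoidsInfinity) (i : ℕ) :
    Module.finrank K (Y.comp i) = Module.finrank K (Y.filtration i) := by
  rw [filtration_natCast, ← LinearMap.range_domRestrict]
  exact (LinearMap.finrank_range_of_inj fun f g h =>
    Subtype.ext (hY.dehom_injOn i f.2 g.2 h)).symm

lemma filtration_succ_le {N i : ℕ}
    (hN : idealOfVars (Fin (n + 1)) K ^ N ≤ Y.ideal ⊔ Ideal.span {X 0}) (hi : N ≤ i) :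
    Y.filtration (i + 1 : ℕ) ≤ Y.filtration i := by
  intro a ha
  obtain ⟨_, ⟨F, hF, rfl⟩, rfl⟩ := Y.mem_filtration_natCast.1 ha
  obtain ⟨H, hH, _, hB, hFsum⟩ := Submodule.mem_sup.1
    (hN (mem_pow_idealOfVars_of_isHomogeneous hF (hi.trans (Nat.le_succ i))))
  obtain ⟨G, rfl⟩ := Ideal.mem_span_singleton'.1 hB
  have hFcomp : F = homogeneousComponent (i + 1) H + homogeneousComponent i G * X 0 := by
    rw [← homogeneousComponent_add_one_mul_X, ← map_add, hFsum, homogeneousComponent_eq_self hF]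
  have hFmk : Ideal.Quotient.mk Y.ideal F =
      Ideal.Quotient.mk Y.ideal (homogeneousComponent i G) * Y.x0 := by
    rw [hFcomp, map_add, map_mul, x0, Ideal.Quotient.eq_zero_iff_mem.2
      (homogeneousComponent_mem_of_mem Y.homogeneous hH _), zero_add]
  refine Y.mem_filtration_natCast.2 ⟨Ideal.Quotient.mk Y.ideal (homogeneousComponent i G),
    ⟨_, homogeneousComponent_isHomogeneous i G, rfl⟩, ?_⟩
  change _ = Y.dehom (Ideal.Quotient.mk Y.ideal F)
  rw [hFmk, map_mul, dehom_x0, mul_one]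

lemma AvoidsInfinity.exists_filtration_eq_top (hY : Y.AvoidsInfinity) :
    ∃ N : ℕ, Y.filtration N = ⊤ := by
  obtain ⟨N, hN⟩ := hY.exists_pow_idealOfVars_le
  have hle (k : ℕ) : Y.filtration (N + k : ℕ) ≤ Y.filtration N := by
    induction k with
    | zero => rfl
    | succ k ih => exact (filtration_succ_le hN (Nat.le_add_right N k)).trans ih
  refine ⟨N, eq_top_iff.2 fun a _ => ?_⟩
  obtain ⟨f, rfl⟩ := Y.dehom_surjective a
  induction f using Y.comp_induction with
  | add f g hf hg =>
    rw [map_add]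
    exact add_mem (hf Submodule.mem_top) (hg Submodule.mem_top)
  | zero => rw [map_zero]; exact zero_mem _
  | mem i f hf =>
    exact hle i (Y.filtration_mono (by simp) (Y.mem_filtration_natCast.2 ⟨f, hf, rfl⟩))

lemma AvoidsInfinity.finite_Gamma (hY : Y.AvoidsInfinity) : Module.Finite K Y.Gamma := by
  obtain ⟨N, hN⟩ := hY.exists_filtration_eq_top
  rw [filtration_natCast] at hN
  exact ⟨hN ▸ (Module.Finite.iff_fg.1 (Y.finite_comp N)).map _⟩

end AvoidsInfinity

lemma deg_eq_finrank [Module.Finite K Y.Gamma] : Y.deg = Module.finrank K Y.Gamma := by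
  classical
  have : IsArtinianRing Y.Gamma := IsArtinianRing.of_finite K Y.Gamma
  have : Fintype Y.Pt := Fintype.ofFinite _
  have (p : Y.Pt) : Module.Finite K (Y.O p) :=
    Module.Finite.of_surjective (Algebra.algHom K Y.Gamma (Y.O p)).toLinearMap
      (IsArtinianRing.localization_surjective p.asIdeal.primeCompl (Y.O p))
  have (p : Y.Pt) : Module.Free K (Y.O p) := inferInstance
  rw [deg, finsum_eq_sum_of_fintype]
  exact (((MaximalSpectrum.toPiLocalizationEquiv Y.Gamma).restrictScalars
    K).toLinearEquiv.finrank_eq.trans (Module.finrank_pi_fintype K (M := Y.O))).symm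

section ReesAlgebra

/-- The embedding of `R` into `Γ[T;T⁻¹]`, where `Γ = R / ⟨x_0 - 1⟩`, as the Rees algebra
`⨁ F_i T^i` of the filtration of `Γ`. -/
def toLaurent : Y.R →ₐ[K] Y.Gamma[T;T⁻¹] :=
  Y.rescale (A := Y.Gamma[T;T⁻¹])
    ((IsScalarTower.toAlgHom K Y.Gamma Y.Gamma[T;T⁻¹]).comp Y.dehomₐ) (T 1)

lemma toLaurent_of_mem {i : ℕ} {f : Y.R} (hf : f ∈ Y.comp i) :
    Y.toLaurent f = LaurentPolynomial.C (Y.dehom f) * T i := by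
  rw [toLaurent, Y.rescale_of_mem _ _ hf, LaurentPolynomial.T_pow, mul_one]
  rfl

lemma toLaurent_x0 : Y.toLaurent Y.x0 = T 1 := by
  simp [Y.toLaurent_of_mem Y.x0_mem_comp]

lemma coeff_toLaurent_mem (f : Y.R) (k : ℤ) : (Y.toLaurent f).coeff k ∈ Y.filtration k := by
  induction f using Y.comp_induction with
  | add f g hf hg => simpa using add_mem hf hg
  | zero => simp
  | mem i f hf =>
    rw [Y.toLaurent_of_mem hf, coeff_C_mul_T]
    split_ifs with h
    · exact h ▸ Y.mem_filtration_natCast.2 ⟨f, hf, rfl⟩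
    · exact zero_mem _

lemma mem_range_toLaurent_iff {p : Y.Gamma[T;T⁻¹]} :
    p ∈ Y.toLaurent.range ↔ ∀ k, p.coeff k ∈ Y.filtration k := by
  refine ⟨?_, fun hp => ?_⟩
  · rintro ⟨f, rfl⟩
    exact Y.coeff_toLaurent_mem f
  rw [← sum_C_coeff_mul_T p]
  refine sum_mem fun k _ => ?_
  rcases lt_or_ge k 0 with hk | hk
  · have h0 : p.coeff k = 0 := by simpa [Y.filtration_of_neg hk] using hp k
    rw [h0, map_zero, zero_mul]
    exact zero_mem _
  · lift k to ℕ using hk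
    obtain ⟨f, hf, hfk⟩ := Y.mem_filtration_natCast.1 (hp k)
    exact ⟨f, hfk ▸ Y.toLaurent_of_mem hf⟩

lemma AvoidsInfinity.toLaurent_injective {Y : ProjSubscheme K n} (hY : Y.AvoidsInfinity) :
    Function.Injective Y.toLaurent := by
  rw [injective_iff_map_eq_zero]
  intro f hf
  obtain ⟨F, rfl⟩ := Ideal.Quotient.mk_surjective f
  have hmem (i : ℕ) : Ideal.Quotient.mk Y.ideal (homogeneousComponent i F) ∈ Y.comp i :=
    ⟨_, homogeneousComponent_isHomogeneous i F, rfl⟩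
  rw [← sum_homogeneousComponent F, map_sum] at hf ⊢
  refine Finset.sum_eq_zero fun i hi => hY.dehom_injOn i (hmem i) (zero_mem _) ?_
  have hcoeff := congrArg (fun p => p.coeff (i : ℤ)) hf
  simpa [Y.toLaurent_of_mem (hmem _), coeff_C_mul_T, hi] using hcoeff

end ReesAlgebra

end ProjSubscheme

section MinimalIdeals

variable {A B : Type*} [CommRing A] [CommRing B]

lemma span_singleton_eq_of_isAtom {I : Ideal A} (hI : IsAtom I) {s : A} (hs : s ∈ I)
    (hs0 : s ≠ 0) : Ideal.span {s} = I :=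
  (hI.le_iff.1 ((Ideal.span_singleton_le_iff_mem I).2 hs)).resolve_left
    (Ideal.span_singleton_eq_bot.not.2 hs0)

lemma isAtom_of_isAtom_map {f : A →+* B} (hf : Function.Surjective f) {I : Ideal A}
    (hinj : Set.InjOn f I) (hI : IsAtom (I.map f)) : IsAtom I := by
  refine ⟨fun h => hI.1 (by rw [h, Ideal.map_bot]), fun J hJ => ?_⟩
  rcases hI.le_iff.1 (Ideal.map_mono hJ.le) with hbot | htop
  · refine (Submodule.eq_bot_iff J).2 fun x hx => hinj (hJ.le hx) I.zero_mem ?_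
    rw [map_zero]
    exact (Submodule.eq_bot_iff _).1 hbot _ (Ideal.mem_map_of_mem f hx)
  · refine absurd (fun x hx => ?_) hJ.not_ge
    obtain ⟨y, hy, hyx⟩ := (Ideal.mem_map_iff_of_surjective f hf).1
      (htop ▸ Ideal.mem_map_of_mem f hx)
    exact hinj (hJ.le hy) hx hyx ▸ hy

lemma finrank_map_eq_of_injOn {K : Type*} [Field K] [Algebra K A] [Algebra K B] [Algebra A B]
    [IsScalarTower K A B] (hf : Function.Surjective (algebraMap A B)) {I : Ideal A}
    (hinj : Set.InjOn (algebraMap A B) I) :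
    Module.finrank K (I.map (algebraMap A B)) = Module.finrank K I := by
  let f : A →ₗ[K] B := (IsScalarTower.toAlgHom K A B).toLinearMap
  have hmap : (I.map (algebraMap A B)).restrictScalars K = (I.restrictScalars K).map f := by
    ext x
    exact Ideal.mem_map_iff_of_surjective _ hf
  change Module.finrank K ((I.map (algebraMap A B)).restrictScalars K) =
    Module.finrank K (I.restrictScalars K)
  rw [hmap, ← LinearMap.range_domRestrict]
  exact LinearMap.finrank_range_of_inj fun x y h => Subtype.ext (hinj x.2 y.2 h)

end MinimalIdeals

section LocalAlgebras

open IsLocalRing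

variable {K A : Type*} [Field K] [CommRing A] [IsLocalRing A]

lemma mul_eq_zero_of_isAtom {I : Ideal A} (hI : IsAtom I) {b s : A} (hb : b ∈ maximalIdeal A)
    (hs : s ∈ I) : b * s = 0 := by
  by_contra h
  have hbs := span_singleton_eq_of_isAtom hI (I.mul_mem_left b hs) h
  obtain ⟨c, hc⟩ := Ideal.mem_span_singleton'.1 (hbs ▸ hs)
  have hunit : IsUnit (1 - c * b) :=
    isUnit_one_sub_self_of_mem_nonunits _ ((maximalIdeal A).mul_mem_left c hb)
  have hs0 : s = 0 := hunit.mul_right_eq_zero.1 (by linear_combination -hc)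
  exact h (by rw [hs0, mul_zero])

variable [Algebra K A]

variable (K) in
lemma finrank_eq_of_isAtom {I : Ideal A} (hI : IsAtom I) :
    Module.finrank K I = Module.finrank K (ResidueField A) := by
  obtain ⟨m, hm, ⟨e⟩⟩ := isSimpleModule_iff_quot_maximal.1 (isSimpleModule_iff_isAtom.2 hI)
  rw [eq_maximalIdeal hm] at e
  exact (e.restrictScalars K).finrank_eq

variable (K A) in
lemma finite_residueField [Module.Finite K A] : Module.Finite K (ResidueField A) :=
  Module.Finite.of_surjective (IsScalarTower.toAlgHom K A (ResidueField A)).toLinearMap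
    residue_surjective

lemma isAtom_of_finrank_eq [Module.Finite K A] {I : Ideal A}
    (hI : Module.finrank K I = Module.finrank K (ResidueField A)) : IsAtom I := by
  have : IsArtinianRing A := IsArtinianRing.of_finite K A
  have := finite_residueField K A
  have hpos : 0 < Module.finrank K I := hI ▸ Module.finrank_pos
  rcases eq_bot_or_exists_atom_le I with rfl | ⟨J, hJ, hJI⟩
  · exact absurd Module.finrank_zero_of_subsingleton hpos.ne'
  · have heq : J.restrictScalars K = I.restrictScalars K :=
      Submodule.eq_of_le_of_finrank_eq hJI ((finrank_eq_of_isAtom K hJ).trans hI.symm)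
    exact Submodule.restrictScalars_injective K A A heq ▸ hJ

lemma mul_mem_span_range_mul {ι : Type*} {s : A} (hs : ∀ b ∈ maximalIdeal A, b * s = 0)
    (B : Module.Basis ι K (ResidueField A)) {e : ι → A} (he : ∀ k, B k = residue A (e k)) (a : A) :
    a * s ∈ Submodule.span K (Set.range fun k => e k * s) := by
  let ρ : A →ₗ[K] ResidueField A := (IsScalarTower.toAlgHom K A (ResidueField A)).toLinearMap
  have hρ : (Submodule.span K (Set.range e)).map ρ = ⊤ := by
    rw [Submodule.map_span, ← Set.range_comp, ← B.span_eq]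
    exact congrArg _ (congrArg _ (funext fun k => (he k).symm))
  obtain ⟨c, hc, hca⟩ : ρ a ∈ (Submodule.span K (Set.range e)).map ρ := hρ ▸ Submodule.mem_top
  have hac : a * s = c * s :=
    sub_eq_zero.1 (by rw [← sub_mul, hs (a - c) (Ideal.Quotient.eq.1 hca.symm)])
  rw [hac, show (Set.range fun k => e k * s) = LinearMap.mulRight K s '' Set.range e from
    Set.range_comp (LinearMap.mulRight K s) e, ← Submodule.map_span]
  exact ⟨c, hc, rfl⟩

end LocalAlgebras

section TraceForms

variable {K A : Type*} [Field K] [CommRing A] [Algebra K A]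

/-- The symmetric bilinear form `(a, b) ↦ τ (a b)` on an algebra which a linear form `τ` induces. -/
def mulForm (τ : A →ₗ[K] K) : LinearMap.BilinForm K A := (LinearMap.mul K A).compr₂ τ

@[simp]
lemma mulForm_apply (τ : A →ₗ[K] K) (a b : A) : mulForm τ a b = τ (a * b) := rfl

lemma mulForm_isSymm (τ : A →ₗ[K] K) : (mulForm τ).IsSymm :=
  ⟨fun a b => by rw [mulForm_apply, mulForm_apply, mul_comm]⟩

lemma nondegenerate_mulForm {τ : A →ₗ[K] K} (h : ∀ a, (∀ b, τ (a * b) = 0) → a = 0) :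
    (mulForm τ).Nondegenerate :=
  ⟨h, fun a ha => h a fun b => mul_comm b a ▸ ha b⟩

lemma forall_mul_mem_orthogonal_iff [Module.Finite K A] {τ : A →ₗ[K] K}
    (hτ : (mulForm τ).Nondegenerate) {I : Ideal A} (hI : IsAtom I) (F : Submodule K A) :
    (∀ b ∈ I, ∀ a ∈ (mulForm τ).orthogonal F, b * a ∈ F) ↔ I.restrictScalars K ≤ F := by
  refine ⟨fun h x hx => ?_, fun h b hb a _ => h (I.mul_mem_right a hb)⟩
  by_cases hmul : ∃ b ∈ I, ∃ a ∈ (mulForm τ).orthogonal F, b * a ≠ 0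
  · obtain ⟨b, hb, a, ha, hba⟩ := hmul
    have hspan : Ideal.span {b * a} = I :=
      span_singleton_eq_of_isAtom hI (I.mul_mem_right a hb) hba
    obtain ⟨c, rfl⟩ := Ideal.mem_span_singleton'.1 (hspan ▸ hx)
    rw [← mul_assoc]
    exact h _ (I.mul_mem_left c hb) a ha
  · push Not at hmul
    rw [← LinearMap.BilinForm.orthogonal_orthogonal hτ (mulForm_isSymm τ).isRefl F]
    intro a ha
    rw [mulForm_apply, mul_comm, hmul x hx a ha, map_zero]

end TraceForms

namespace ZeroDimScheme

variable {K : Type*} [Field K] {n : ℕ} (S : ZeroDimScheme K n)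

lemma avoidsInfinity : S.AvoidsInfinity := S.not_at_infinity

instance finite_Gamma : Module.Finite K S.Gamma := S.avoidsInfinity.finite_Gamma

instance isArtinianRing_Gamma : IsArtinianRing S.Gamma := IsArtinianRing.of_finite K S.Gamma

instance nontrivial_Gamma : Nontrivial S.Gamma := by
  by_contra h
  rw [not_nontrivial_iff_subsingleton] at h
  have hone : (1 : S.R) = 0 :=
    S.avoidsInfinity.dehom_injOn 0 S.one_mem_comp (zero_mem _) (Subsingleton.elim _ _)
  have : Subsingleton S.R := subsingleton_of_zero_eq_one hone.symm
  exact absurd S.zero_dim (by rw [ringKrullDim_eq_bot_of_subsingleton]; exact WithBot.bot_ne_one)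

lemma HF_eq_deg_iff (i : ℕ) : S.HF i = S.deg ↔ S.filtration i = ⊤ := by
  rw [HF, S.avoidsInfinity.finrank_comp, S.deg_eq_finrank]
  exact ⟨Submodule.eq_top_of_finrank_eq, fun h => by rw [h, finrank_top]⟩

lemma filtration_rX : S.filtration S.rX = ⊤ := by
  obtain ⟨N, hN⟩ := S.avoidsInfinity.exists_filtration_eq_top
  have hmem : S.rX ∈ {r : ℕ | ∀ i, r ≤ i → S.HF i = S.deg} :=
    Nat.sInf_mem ⟨N, fun i hi => (S.HF_eq_deg_iff i).2
      (top_le_iff.1 (hN ▸ S.filtration_mono (Int.ofNat_le.2 hi)))⟩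
  exact (S.HF_eq_deg_iff _).1 (hmem _ le_rfl)

lemma filtration_eq_top {i : ℤ} (hi : (S.rX : ℤ) ≤ i) : S.filtration i = ⊤ :=
  top_le_iff.1 (S.filtration_rX ▸ S.filtration_mono hi)

lemma exists_mem_comp_rX (a : S.Gamma) : ∃ f ∈ S.comp S.rX, S.dehom f = a :=
  S.mem_filtration_natCast.1 (S.filtration_rX ▸ Submodule.mem_top)

section LaurentEquiv

lemma isUnit_dehom {g : S.R} (hg : g ∈ S.homNZD) : IsUnit (S.dehom g) := by
  obtain ⟨hg, b, hb⟩ := hg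
  refine IsArtinianRing.isUnit_of_mem_nonZeroDivisors (mem_nonZeroDivisors_iff_left.2 ?_)
  intro a ha
  obtain ⟨f, hf, rfl⟩ := S.exists_mem_comp_rX a
  have hgf : g * f = 0 := S.avoidsInfinity.dehom_injOn (b + S.rX) (S.mul_mem_comp hb hf)
    (zero_mem _) (by rw [map_mul, ha, map_zero])
  rw [(mem_nonZeroDivisors_iff_left.1 hg) f hgf, map_zero]

lemma isUnit_toLaurent (g : S.homNZD) : IsUnit (S.toLaurent g) := by
  obtain ⟨b, hb⟩ := g.2.2
  rw [S.toLaurent_of_mem hb]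
  exact ((S.isUnit_dehom g.2).map _).mul (LaurentPolynomial.isUnit_T _)

/-- The extension of `R → Γ[T;T⁻¹]` to `Q^h(R)`. -/
def laurentHom : S.Q →ₐ[K] S.Gamma[T;T⁻¹] :=
  IsLocalization.liftAlgHom (M := S.homNZD) (S := S.Q) (P := S.Gamma[T;T⁻¹]) (f := S.toLaurent)
    S.isUnit_toLaurent

lemma laurentHom_algebraMap (f : S.R) : S.laurentHom (algebraMap S.R S.Q f) = S.toLaurent f :=
  IsLocalization.lift_eq (S := S.Q) (P := S.Gamma[T;T⁻¹]) S.isUnit_toLaurent f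

lemma coe_x0Q : (S.x0Q : S.Q) = algebraMap S.R S.Q S.x0 := rfl

lemma laurentHom_x0Q_zpow (k : ℤ) : S.laurentHom ((S.x0Q ^ k : S.Qˣ) : S.Q) = T k := by
  have hx0 : S.laurentHom S.x0Q = T 1 := by
    rw [coe_x0Q, laurentHom_algebraMap, S.toLaurent_x0]
  induction k with
  | zero => simp
  | succ k ih =>
    rw [zpow_add_one, Units.val_mul, map_mul, ih, hx0, LaurentPolynomial.T_add]
  | pred k ih =>
    refine (LaurentPolynomial.isUnit_T 1).mul_left_injective ?_
    change S.laurentHom _ * T 1 = T (-k - 1) * T 1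
    rw [← hx0, ← map_mul, ← Units.val_mul, ← zpow_add_one, hx0, ← LaurentPolynomial.T_add,
      sub_add_cancel, ih]

lemma algebraMap_injective : Function.Injective (algebraMap S.R S.Q) :=
  IsLocalization.injective S.Q fun _ (h : _ ∈ S.homNZD) => h.1

lemma laurentHom_injective : Function.Injective S.laurentHom :=
  (IsLocalization.lift_injective_iff (S := S.Q) (P := S.Gamma[T;T⁻¹]) S.isUnit_toLaurent).2
    fun _ _ => S.algebraMap_injective.eq_iff.trans S.avoidsInfinity.toLaurent_injective.eq_iff.symm

lemma laurentHom_surjective : Function.Surjective S.laurentHom := by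
  intro p
  induction p using LaurentPolynomial.induction_on' with
  | add p q hp hq =>
    obtain ⟨a, rfl⟩ := hp
    obtain ⟨b, rfl⟩ := hq
    exact ⟨a + b, map_add _ _ _⟩
  | C_mul_T k a =>
    obtain ⟨f, hf, rfl⟩ := S.exists_mem_comp_rX a
    refine ⟨algebraMap S.R S.Q f * ((S.x0Q ^ (k - S.rX) : S.Qˣ) : S.Q), ?_⟩
    rw [map_mul, laurentHom_algebraMap, laurentHom_x0Q_zpow, S.toLaurent_of_mem hf, mul_assoc,
      ← LaurentPolynomial.T_add, add_sub_cancel]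

/-- The isomorphism `Q^h(R) ≃ Γ[T;T⁻¹]`, `f / x_0^k ↦ f(1, x_1, …, x_n) T^(i-k)` for `f ∈ R_i`. -/
def laurentEquiv : S.Q ≃ₐ[K] S.Gamma[T;T⁻¹] :=
  AlgEquiv.ofBijective S.laurentHom ⟨S.laurentHom_injective, S.laurentHom_surjective⟩

@[simp]
lemma laurentEquiv_algebraMap (f : S.R) :
    S.laurentEquiv (algebraMap S.R S.Q f) = S.toLaurent f :=
  S.laurentHom_algebraMap f

@[simp]
lemma laurentEquiv_x0Q_zpow (k : ℤ) : S.laurentEquiv ((S.x0Q ^ k : S.Qˣ) : S.Q) = T k :=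
  S.laurentHom_x0Q_zpow k

lemma laurentEquiv_x0Q_zpow_mul {i : ℕ} {f : S.R} (hf : f ∈ S.comp i) (k : ℤ) :
    S.laurentEquiv (((S.x0Q ^ k : S.Qˣ) : S.Q) * algebraMap S.R S.Q f) =
      LaurentPolynomial.C (S.dehom f) * T (k + i) := by
  rw [map_mul, laurentEquiv_x0Q_zpow, laurentEquiv_algebraMap, S.toLaurent_of_mem hf,
    LaurentPolynomial.T_mul, mul_assoc, ← LaurentPolynomial.T_add, add_comm (i : ℤ)]

lemma eq_mk_iff {q : S.Q} {f : S.R} {g : S.homNZD} :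
    q = Localization.mk f g ↔ S.laurentEquiv q * S.toLaurent g = S.toLaurent f := by
  rw [Localization.mk_eq_mk', IsLocalization.eq_mk'_iff_mul_eq, ← S.laurentEquiv.injective.eq_iff,
    map_mul, laurentEquiv_algebraMap, laurentEquiv_algebraMap]

lemma mem_range_algebraMap_iff {q : S.Q} :
    q ∈ Set.range (algebraMap S.R S.Q) ↔ ∀ k, (S.laurentEquiv q).coeff k ∈ S.filtration k := by
  rw [← S.mem_range_toLaurent_iff]
  refine exists_congr fun f => ?_
  rw [← S.laurentEquiv.injective.eq_iff, laurentEquiv_algebraMap]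
  rfl

lemma mem_compQ_iff {i : ℤ} {q : S.Q} :
    q ∈ S.compQ i ↔ ∃ a, S.laurentEquiv q = LaurentPolynomial.C a * T i := by
  constructor
  · rintro ⟨a, b, f, g, hf, hg, rfl, hq⟩
    obtain ⟨u, hu⟩ := (S.isUnit_dehom g.2).exists_right_inv
    rw [eq_mk_iff, S.toLaurent_of_mem hf, S.toLaurent_of_mem hg] at hq
    refine ⟨S.dehom f * u, (S.isUnit_toLaurent g).mul_left_injective ?_⟩
    change _ * S.toLaurent g = _ * S.toLaurent g
    rw [S.toLaurent_of_mem hg, hq, C_mul_T_mul_C_mul_T, mul_assoc, mul_comm u, hu, mul_one,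
      sub_add_cancel]
  · rintro ⟨a, ha⟩
    obtain ⟨f, hf, rfl⟩ := S.exists_mem_comp_rX a
    let x0' : S.homNZD := ⟨S.x0, S.x0_mem_homNZD⟩
    refine ⟨S.rX + (i - S.rX).toNat, (S.rX - i).toNat, f * S.x0 ^ (i - S.rX).toNat,
      x0' ^ (S.rX - i).toNat, S.mul_mem_comp hf (S.x0_pow_mem_comp _), S.x0_pow_mem_comp _,
      by omega, S.eq_mk_iff.2 ?_⟩
    rw [ha, SubmonoidClass.coe_pow, map_mul, S.toLaurent_of_mem hf, map_pow, map_pow,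
      S.toLaurent_x0, LaurentPolynomial.T_pow, LaurentPolynomial.T_pow, mul_assoc, mul_assoc,
      ← LaurentPolynomial.T_add, ← LaurentPolynomial.T_add]
    congr 2
    omega

end LaurentEquiv

section Subalgebras

lemma x0Q_zpow_mem_L0 (k : ℤ) : ((S.x0Q ^ k : S.Qˣ) : S.Q) ∈ S.L0 := by
  cases k with
  | ofNat m =>
    rw [Int.ofNat_eq_natCast, zpow_natCast, Units.val_pow_eq_pow_val]
    exact pow_mem (Algebra.subset_adjoin (by simp)) m
  | negSucc m =>
    rw [zpow_negSucc, ← inv_pow, Units.val_pow_eq_pow_val]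
    exact pow_mem (Algebra.subset_adjoin (by simp)) _

lemma coeff_laurentEquiv_mem_bot {q : S.Q} (hq : q ∈ S.L0) (k : ℤ) :
    (S.laurentEquiv q).coeff k ∈ (⊥ : Subalgebra K S.Gamma) := by
  let ι : K[T;T⁻¹] →ₐ[K] S.Gamma[T;T⁻¹] := AddMonoidAlgebra.mapAlgHom ℤ (Algebra.ofId K S.Gamma)
  have hι (i : ℤ) : ι (T i) = T i :=
    (AddMonoidAlgebra.mapAlgHom_single _ i 1).trans (by rw [map_one]; rfl)
  have hL0 : S.L0 ≤ ι.range.comap S.laurentEquiv.toAlgHom := by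
    refine Algebra.adjoin_le ?_
    rintro _ (rfl | rfl)
    · exact ⟨T 1, (hι 1).trans (by simpa using (S.laurentEquiv_x0Q_zpow 1).symm)⟩
    · exact ⟨T (-1), (hι (-1)).trans (by simpa using (S.laurentEquiv_x0Q_zpow (-1)).symm)⟩
  obtain ⟨p, hp⟩ := hL0 hq
  exact ⟨p.coeff k, (AddMonoidAlgebra.coeff_mapAlgHom _ p k).symm.trans
    (congrArg (fun x => x.coeff k) hp)⟩

lemma algebraMap_mem_L0 {f : S.R} (hf : f ∈ S.Kx0) : algebraMap S.R S.Q f ∈ S.L0 := by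
  have hle : S.Kx0 ≤ S.L0.comap (IsScalarTower.toAlgHom K S.R S.Q) :=
    Algebra.adjoin_le (Set.singleton_subset_iff.2 (Algebra.subset_adjoin (Or.inl rfl)))
  exact hle hf

lemma exists_mem_Kx0_iff {q : S.Q} (hq : q ∈ S.L0) :
    (∃ y ∈ S.Kx0, algebraMap S.R S.Q y = q) ↔ ∀ k < 0, (S.laurentEquiv q).coeff k = 0 := by
  constructor
  · rintro ⟨y, -, rfl⟩ k hk
    simpa [S.filtration_of_neg hk] using S.coeff_toLaurent_mem y k
  · intro hneg
    choose c hc using fun k => Algebra.mem_bot.1 (S.coeff_laurentEquiv_mem_bot hq k)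
    refine ⟨∑ k ∈ (S.laurentEquiv q).coeff.support, c k • S.x0 ^ k.toNat, sum_mem fun k _ =>
      Subalgebra.smul_mem _ (pow_mem (Algebra.self_mem_adjoin_singleton K S.x0) _) _,
      S.laurentEquiv.injective ?_⟩
    rw [laurentEquiv_algebraMap, map_sum]
    refine (Finset.sum_congr rfl fun k hk => ?_).trans (sum_C_coeff_mul_T (S.laurentEquiv q))
    have hk0 : 0 ≤ k := not_lt.1 fun hlt => Finsupp.mem_support_iff.1 hk (hneg k hlt)
    rw [map_smul, map_pow, S.toLaurent_x0, LaurentPolynomial.T_pow, mul_one,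
      Int.toNat_of_nonneg hk0, Algebra.smul_def, LaurentPolynomial.algebraMap_apply, hc]

end Subalgebras

section TraceMap

/-- Under `Q^h(R) ≃ Γ[T;T⁻¹]`, the map `σ` applies the linear form `τ : Γ → K` to every coefficient:
it sends `∑ a_k T^k` to `∑ τ(a_k) T^k`. -/
def IsCoeffwiseExtension (τ : S.Gamma →ₗ[K] K) (σ : S.Q →ₗ[S.L0] S.L0) : Prop :=
  ∀ (q : S.Q) (k : ℤ), (S.laurentEquiv (σ q)).coeff k =
    algebraMap K S.Gamma (τ ((S.laurentEquiv q).coeff k))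

variable {S} {σ : S.Q →ₗ[S.L0] S.L0} {τ : S.Gamma →ₗ[K] K}

lemma IsHomogeneousTraceMap.exists_laurentEquiv_symm_C (hσ : S.IsHomogeneousTraceMap σ)
    (a : S.Gamma) : ∃ c : K, S.laurentEquiv (σ (S.laurentEquiv.symm (LaurentPolynomial.C a))) =
      LaurentPolynomial.C (algebraMap K S.Gamma c) := by
  have hdeg : S.laurentEquiv.symm (LaurentPolynomial.C a) ∈ S.compQ 0 :=
    S.mem_compQ_iff.2 ⟨a, by simp⟩
  obtain ⟨b, hb⟩ := S.mem_compQ_iff.1 (hσ.degree_zero 0 _ hdeg)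
  obtain ⟨c, hc⟩ := Algebra.mem_bot.1 (S.coeff_laurentEquiv_mem_bot (σ _).2 0)
  rw [hb, coeff_C_mul_T, if_pos rfl] at hc
  exact ⟨c, by rw [hb, hc, LaurentPolynomial.T_zero, mul_one]⟩

lemma laurentEquiv_apply_symm_C_mul_T (σ : S.Q →ₗ[S.L0] S.L0) (a : S.Gamma) (i : ℤ) :
    S.laurentEquiv (σ (S.laurentEquiv.symm (LaurentPolynomial.C a * T i))) =
      S.laurentEquiv (σ (S.laurentEquiv.symm (LaurentPolynomial.C a))) * T i := by
  let c : S.L0 := ⟨_, S.x0Q_zpow_mem_L0 i⟩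
  have hc : S.laurentEquiv.symm (LaurentPolynomial.C a * T i) =
      c • S.laurentEquiv.symm (LaurentPolynomial.C a) := by
    rw [AlgEquiv.symm_apply_eq, Subalgebra.smul_def, smul_eq_mul, map_mul, laurentEquiv_x0Q_zpow,
      AlgEquiv.apply_symm_apply, LaurentPolynomial.T_mul]
  rw [hc, map_smul, smul_eq_mul, Subalgebra.coe_mul, map_mul, laurentEquiv_x0Q_zpow,
    LaurentPolynomial.T_mul]

lemma isCoeffwiseExtension_of_C
    (h : ∀ a, S.laurentEquiv (σ (S.laurentEquiv.symm (LaurentPolynomial.C a))) =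
      LaurentPolynomial.C (algebraMap K S.Gamma (τ a))) : S.IsCoeffwiseExtension τ σ := by
  intro q k
  obtain ⟨p, rfl⟩ := S.laurentEquiv.symm.surjective q
  induction p using LaurentPolynomial.induction_on' with
  | add p q hp hq => simp only [map_add, Subalgebra.coe_add, AddMonoidAlgebra.coeff_add,
      Finsupp.add_apply, hp, hq]
  | C_mul_T i a =>
    rw [laurentEquiv_apply_symm_C_mul_T, h, AlgEquiv.apply_symm_apply, coeff_C_mul_T,
      coeff_C_mul_T]
    split_ifs <;> simp

lemma IsHomogeneousTraceMap.exists_isCoeffwiseExtension (hσ : S.IsHomogeneousTraceMap σ) :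
    ∃ τ, S.IsCoeffwiseExtension τ σ := by
  choose τ hτ using hσ.exists_laurentEquiv_symm_C
  have hinj : Function.Injective fun c : K =>
      (LaurentPolynomial.C (algebraMap K S.Gamma c) : S.Gamma[T;T⁻¹]) :=
    (algebraMap K S.Gamma[T;T⁻¹]).injective
  let τ' : S.Gamma →ₗ[K] K :=
    { toFun := τ
      map_add' a b := hinj (by simp only [← hτ, map_add, Subalgebra.coe_add])
      map_smul' c a := hinj (by
        have hsmul : algebraMap K S.Gamma (c • τ a) = c • algebraMap K S.Gamma (τ a) :=
          map_smul (Algebra.linearMap K S.Gamma) c (τ a)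
        simp only [RingHom.id_apply, hsmul, laurentC_smul, ← hτ, map_smul,
          LinearMap.map_smul_of_tower, Subalgebra.coe_smul]) }
  exact ⟨τ', isCoeffwiseExtension_of_C hτ⟩

lemma IsHomogeneousTraceMap.nondegenerate (hσ : S.IsHomogeneousTraceMap σ)
    (hτ : S.IsCoeffwiseExtension τ σ) : (mulForm τ).Nondegenerate := by
  refine nondegenerate_mulForm fun a ha => ?_
  have hSig : S.Sig σ (S.laurentEquiv.symm (LaurentPolynomial.C a)) = S.Sig σ 0 := by
    ext q
    refine S.laurentEquiv.injective (LaurentPolynomial.ext fun k => ?_)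
    have hcoeff : (LaurentPolynomial.C a * S.laurentEquiv q).coeff k =
        a * (S.laurentEquiv q).coeff k := by
      simpa using coeff_C_mul_T_mul a 0 (S.laurentEquiv q) k
    change (S.laurentEquiv (σ (_ * q))).coeff k = (S.laurentEquiv (σ (0 * q))).coeff k
    rw [hτ, hτ, map_mul, AlgEquiv.apply_symm_apply, hcoeff, ha, zero_mul, map_zero]
    simp
  have hC : (LaurentPolynomial.C a : S.Gamma[T;T⁻¹]) = 0 := by
    simpa using congrArg S.laurentEquiv (hσ.basis.1 hSig)
  simpa using congrArg (fun p => p.coeff 0) hC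

end TraceMap

section Different

variable {S} {σ : S.Q →ₗ[S.L0] S.L0} {τ : S.Gamma →ₗ[K] K}

lemma exists_isExtension_iff {ψ : S.Q →ₗ[S.L0] S.L0} :
    (∃ φ, S.IsExtension φ ψ) ↔
      ∀ f : S.R, ∃ y ∈ S.Kx0, algebraMap S.R S.Q y = ψ (algebraMap S.R S.Q f) := by
  refine ⟨fun ⟨φ, hφ⟩ f => ⟨φ f, (φ f).2, (hφ f).symm⟩, fun h => ?_⟩
  choose φ hφmem hφ using h
  refine ⟨{ toFun f := ⟨φ f, hφmem f⟩, map_add' f g := ?_, map_smul' c f := ?_ },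
    fun f => (hφ f).symm⟩
  · exact Subtype.ext (S.algebraMap_injective (by simp [hφ]))
  · have hc : algebraMap S.R S.Q (c • f) =
        (⟨_, S.algebraMap_mem_L0 c.2⟩ : S.L0) • algebraMap S.R S.Q f :=
      map_mul (algebraMap S.R S.Q) (c : S.R) f
    refine Subtype.ext (S.algebraMap_injective ?_)
    rw [hφ, hc, map_smul]
    simp [hφ]

lemma IsCoeffwiseExtension.mem_complementary_iff_forall (hτ : S.IsCoeffwiseExtension τ σ)
    {g : S.Q} : g ∈ S.complementary σ ↔
      ∀ f : S.R, ∀ k < 0, τ ((S.toLaurent f * S.laurentEquiv g).coeff k) = 0 := by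
  refine exists_isExtension_iff.trans (forall_congr' fun f => ?_)
  rw [S.exists_mem_Kx0_iff (Subtype.prop _)]
  refine forall₂_congr fun k _ => ?_
  change (S.laurentEquiv (σ (g * algebraMap S.R S.Q f))).coeff k = 0 ↔ _
  rw [hτ, map_eq_zero, mul_comm g, map_mul, laurentEquiv_algebraMap]

lemma IsCoeffwiseExtension.mem_complementary_iff (hτ : S.IsCoeffwiseExtension τ σ) {g : S.Q} :
    g ∈ S.complementary σ ↔
      ∀ m, (S.laurentEquiv g).coeff (-1 - m) ∈ (mulForm τ).orthogonal (S.filtration m) := by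
  rw [hτ.mem_complementary_iff_forall]
  constructor
  · intro h m a ha
    rcases lt_or_ge m 0 with hm | hm
    · have ha0 : a = 0 := by simpa [S.filtration_of_neg hm] using ha
      simp [ha0]
    · lift m to ℕ using hm
      obtain ⟨f, hf, rfl⟩ := S.mem_filtration_natCast.1 ha
      have hf1 := h f (-1) (by norm_num)
      rwa [S.toLaurent_of_mem hf, coeff_C_mul_T_mul] at hf1
  · intro h f k hk
    induction f using S.comp_induction with
    | add f g hf hg => rw [map_add, add_mul, AddMonoidAlgebra.coeff_add, Finsupp.add_apply, map_add,
        hf, hg, add_zero]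
    | zero => simp
    | mem i f hf =>
      have hmem : S.dehom f ∈ S.filtration (-1 - (k - i)) :=
        S.filtration_mono (by omega) (S.mem_filtration_natCast.2 ⟨f, hf, rfl⟩)
      rw [S.toLaurent_of_mem hf, coeff_C_mul_T_mul]
      simpa using h _ _ hmem

lemma IsCoeffwiseExtension.mem_different_iff_forall (hτ : S.IsCoeffwiseExtension τ σ) {q : S.Q}
    {b : S.Gamma} {d : ℤ} (hq : S.laurentEquiv q = LaurentPolynomial.C b * T d) :
    q ∈ S.different σ ↔
      ∀ m, ∀ a ∈ (mulForm τ).orthogonal (S.filtration m), b * a ∈ S.filtration (d - 1 - m) := by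
  have hmem (g : S.Q) : q * g ∈ Set.range (algebraMap S.R S.Q) ↔
      ∀ k, b * (S.laurentEquiv g).coeff (k - d) ∈ S.filtration k := by
    simp only [S.mem_range_algebraMap_iff, map_mul, hq, coeff_C_mul_T_mul]
  constructor
  · intro h m a ha
    let g : S.Q := S.laurentEquiv.symm (LaurentPolynomial.C a * T (-1 - m))
    have hcoeff (k : ℤ) : (S.laurentEquiv g).coeff k = if -1 - m = k then a else 0 := by
      rw [AlgEquiv.apply_symm_apply, coeff_C_mul_T]
    have hg : g ∈ S.complementary σ := by
      refine hτ.mem_complementary_iff.2 fun m' => ?_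
      rw [hcoeff]
      split_ifs with hm'
      · rwa [show m' = m by omega]
      · exact zero_mem _
    have hba := (hmem g).1 (h g hg) (d - 1 - m)
    rwa [hcoeff, if_pos (by ring)] at hba
  · intro h g hg
    refine (hmem g).2 fun k => ?_
    have hba := h _ _ (hτ.mem_complementary_iff.1 hg (d - 1 - k))
    rwa [sub_sub_cancel, show -1 - (d - 1 - k) = k - d by ring] at hba

/- For `m ≥ r` the orthogonal of `F_m = Γ` is zero, and for `m < r - 1` the target `F_(2r - 2 - m)`
is `Γ`, so that only `m = r - 1` is a condition. -/
lemma IsCoeffwiseExtension.mem_different_iff (hτ : S.IsCoeffwiseExtension τ σ)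
    (hnd : (mulForm τ).Nondegenerate) {q : S.Q} {b : S.Gamma}
    (hq : S.laurentEquiv q = LaurentPolynomial.C b * T (2 * S.rX - 1)) :
    q ∈ S.different σ ↔ ∀ a ∈ (mulForm τ).orthogonal (S.filtration (S.rX - 1)),
      b * a ∈ S.filtration (S.rX - 1) := by
  rw [hτ.mem_different_iff_forall hq]
  refine ⟨fun h => ?_, fun h m a ha => ?_⟩
  · simpa only [show (2 * S.rX - 1 - 1 - (S.rX - 1) : ℤ) = S.rX - 1 by ring] using h (S.rX - 1)
  rcases lt_trichotomy m (S.rX - 1) with hm | rfl | hm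
  · rw [S.filtration_eq_top (by omega)]
    exact Submodule.mem_top
  · rw [show (2 * S.rX - 1 - 1 - (S.rX - 1) : ℤ) = S.rX - 1 by ring]
    exact h a ha
  · rw [S.filtration_eq_top (by omega)] at ha
    have ha0 : a = 0 := hnd.2 a fun c => ha c Submodule.mem_top
    rw [ha0, mul_zero]
    exact zero_mem _

end Different

section AffineIdeal

variable {S}

lemma algebraMap_O_surjective (p : S.Pt) : Function.Surjective (algebraMap S.Gamma (S.O p)) :=
  IsArtinianRing.localization_surjective p.asIdeal.primeCompl (S.O p)

instance finite_O (p : S.Pt) : Module.Finite K (S.O p) :=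
  Module.Finite.of_surjective (Algebra.algHom K S.Gamma (S.O p)).toLinearMap
    (algebraMap_O_surjective p)

lemma eq_of_forall_algebraMap_O_eq {a b : S.Gamma}
    (h : ∀ p : S.Pt, algebraMap S.Gamma (S.O p) a = algebraMap S.Gamma (S.O p) b) : a = b :=
  MaximalSpectrum.toPiLocalization_injective _ (funext h)

variable (S) in
/-- The ideal of the subscheme `𝕐 ⊆ 𝕏` in the affine coordinate ring `Γ` of `𝕏`. -/
def affineIdeal (Y : ProjSubscheme K n) : Ideal S.Gamma := (S.relIdeal Y).map S.dehom

variable {Y : ProjSubscheme K n} {p : S.Pt}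

lemma mk_mem_affineIdeal_iff (hY : S.ideal ≤ Y.ideal) {F : MvPolynomial (Fin (n + 1)) K} :
    (Ideal.Quotient.mk _ F : S.Gamma) ∈ S.affineIdeal Y ↔
      F ∈ Y.ideal ⊔ Ideal.span {X 0 - 1} := by
  have hmap : S.affineIdeal Y =
      Y.ideal.map (Ideal.Quotient.mk (S.ideal ⊔ Ideal.span {X 0 - 1})) := by
    rw [affineIdeal, relIdeal, Ideal.map_map]; rfl
  rw [hmap, ← Ideal.mem_comap, Ideal.comap_map_of_surjective' _ Ideal.Quotient.mk_surjective,
    Ideal.mk_ker, ← sup_assoc, sup_eq_left.2 hY]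

lemma dehom_mem_affineIdeal_iff (hY : S.ideal ≤ Y.ideal) {i : ℕ} {f : S.R} (hf : f ∈ S.comp i) :
    S.dehom f ∈ S.affineIdeal Y ↔ f ∈ S.relIdeal Y := by
  refine ⟨fun h => ?_, Ideal.mem_map_of_mem _⟩
  obtain ⟨F, hF, rfl⟩ := hf
  have hFY : Ideal.Quotient.mk Y.ideal F = 0 :=
    (S.avoidsInfinity.mono hY).dehom_injOn i ⟨F, hF, rfl⟩ (zero_mem _)
      (Ideal.Quotient.eq_zero_iff_mem.2 ((mk_mem_affineIdeal_iff hY).1 h))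
  exact Ideal.mem_map_of_mem _ (Ideal.Quotient.eq_zero_iff_mem.1 hFY)

lemma deg_add_finrank_affineIdeal (hY : S.ideal ≤ Y.ideal) :
    Y.deg + Module.finrank K (S.affineIdeal Y) = S.deg := by
  have : Module.Finite K Y.Gamma := (S.avoidsInfinity.mono hY).finite_Gamma
  let π : S.Gamma →ₐ[K] Y.Gamma := Ideal.Quotient.factorₐ K (sup_le_sup_right hY _)
  have hπ : LinearMap.range π.toLinearMap = ⊤ :=
    LinearMap.range_eq_top.2 (Ideal.Quotient.factor_surjective (sup_le_sup_right hY _))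
  have hker : LinearMap.ker π.toLinearMap = (S.affineIdeal Y).restrictScalars K := by
    ext a
    obtain ⟨F, rfl⟩ := Ideal.Quotient.mk_surjective a
    exact Ideal.Quotient.eq_zero_iff_mem.trans (mk_mem_affineIdeal_iff hY).symm
  have hrank := LinearMap.finrank_range_add_finrank_ker π.toLinearMap
  rw [hπ, finrank_top, hker] at hrank
  rw [Y.deg_eq_finrank, S.deg_eq_finrank]
  exact hrank

lemma stalkKer_eq_map : S.stalkKer Y p = (S.affineIdeal Y).map (algebraMap S.Gamma (S.O p)) := by
  rw [stalkKer, affineIdeal, Ideal.map_map]; rfl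

lemma mem_stalkKer_iff {x : S.O p} :
    x ∈ S.stalkKer Y p ↔ ∃ b ∈ S.affineIdeal Y, algebraMap S.Gamma (S.O p) b = x := by
  rw [stalkKer_eq_map]
  exact Ideal.mem_map_iff_of_surjective _ (algebraMap_O_surjective p)

end AffineIdeal

section Separators

variable {S} {p : S.Pt} {Y : ProjSubscheme K n}

lemma exists_isResidueBasis (p : S.Pt) : ∃ e, S.IsResidueBasis p e := by
  have := finite_residueField K (S.O p)
  let B := Module.finBasis K (S.kappa p)
  choose e he using fun k => IsLocalRing.residue_surjective (R := S.O p) (B k)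
  exact ⟨e, B, fun k => (he k).symm⟩

lemma IsResidueBasis.mul_ne_zero {e : Fin (Module.finrank K (S.kappa p)) → S.O p}
    (he : S.IsResidueBasis p e) {s : S.O p} (hs : s ≠ 0) (k) : e k * s ≠ 0 := by
  obtain ⟨B, hB⟩ := he
  have hunit : IsUnit (e k) := by
    by_contra hk
    exact B.ne_zero k ((hB k).trans ((IsLocalRing.residue_eq_zero_iff _).2 hk))
  exact fun h => hs (hunit.mul_right_eq_zero.1 h)

namespace IsMaximalSubscheme

lemma algebraMap_O_eq_zero (hY : S.IsMaximalSubscheme p Y) {b : S.Gamma}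
    (hb : b ∈ S.affineIdeal Y) {q : S.Pt} (hq : q ≠ p) : algebraMap S.Gamma (S.O q) b = 0 := by
  have hmem : algebraMap S.Gamma (S.O q) b ∈ S.stalkKer Y q := mem_stalkKer_iff.2 ⟨b, hb, rfl⟩
  rwa [hY.stalk_eq q hq] at hmem

lemma algebraMap_O_injOn (hY : S.IsMaximalSubscheme p Y) :
    Set.InjOn (algebraMap S.Gamma (S.O p)) (S.affineIdeal Y) := by
  intro a ha b hb hab
  refine eq_of_forall_algebraMap_O_eq fun q => ?_
  by_cases hq : q = p
  · subst hq; exact hab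
  · rw [hY.algebraMap_O_eq_zero ha hq, hY.algebraMap_O_eq_zero hb hq]

lemma isAtom_stalkKer (hY : S.IsMaximalSubscheme p Y) : IsAtom (S.stalkKer Y p) := by
  refine isAtom_of_finrank_eq (K := K) (A := S.O p) ?_
  rw [stalkKer_eq_map, finrank_map_eq_of_injOn (K := K) (A := S.Gamma) (B := S.O p)
    (algebraMap_O_surjective p) hY.algebraMap_O_injOn]
  exact Nat.add_left_cancel ((deg_add_finrank_affineIdeal hY.le).trans hY.deg_eq.symm)

lemma isAtom_affineIdeal (hY : S.IsMaximalSubscheme p Y) : IsAtom (S.affineIdeal Y) :=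
  isAtom_of_isAtom_map (A := S.Gamma) (B := S.O p) (algebraMap_O_surjective p)
    hY.algebraMap_O_injOn (stalkKer_eq_map (S := S) ▸ hY.isAtom_stalkKer)

lemma exists_isSocleElement (hY : S.IsMaximalSubscheme p Y) : ∃ s, S.IsSocleElement p Y s := by
  have hatom := hY.isAtom_stalkKer
  obtain ⟨s, hs, hs0⟩ := Submodule.exists_mem_ne_zero_of_ne_bot hatom.1
  exact ⟨s, hs0, fun b hb => mul_eq_zero_of_isAtom (A := S.O p) hatom hb hs,
    (span_singleton_eq_of_isAtom (A := S.O p) hatom hs hs0).symm⟩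

lemma setOf_separator_degree_eq (hY : S.IsMaximalSubscheme p Y) {b : S.Gamma}
    (hb : b ∈ S.affineIdeal Y) :
    {i : ℕ | ∃ f ∈ S.comp i, S.germ p f = algebraMap S.Gamma (S.O p) b ∧
      ∀ q : S.Pt, q ≠ p → S.germ q f = 0} = {i : ℕ | b ∈ S.filtration i} := by
  ext i
  refine Iff.trans (exists_congr fun f => and_congr_right fun _ => ?_)
    S.mem_filtration_natCast.symm
  refine ⟨fun ⟨hp, hne⟩ => eq_of_forall_algebraMap_O_eq fun q => ?_, ?_⟩
  · by_cases hq : q = p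
    · subst hq; exact hp
    · rw [hY.algebraMap_O_eq_zero hb hq]; exact hne q hq
  · rintro rfl
    exact ⟨rfl, fun q hq => hY.algebraMap_O_eq_zero hb hq⟩

lemma mu_le_iff (hY : S.IsMaximalSubscheme p Y) {b : S.Gamma} (hb : b ∈ S.affineIdeal Y)
    (hb0 : b ≠ 0) {d : ℤ} :
    (S.mu p (algebraMap S.Gamma (S.O p) b) : ℤ) ≤ d ↔ b ∈ S.filtration d := by
  rw [mu, hY.setOf_separator_degree_eq hb]
  rcases lt_or_ge d 0 with hd | hd
  · rw [S.filtration_of_neg hd, Submodule.mem_bot]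
    exact iff_of_false (by omega) hb0
  · lift d to ℕ using hd
    refine ⟨fun h => S.filtration_mono h ?_, fun h => Int.ofNat_le.2 (Nat.sInf_le h)⟩
    exact Nat.sInf_mem (s := {i : ℕ | b ∈ S.filtration i})
      ⟨S.rX, S.mem_filtration_natCast.2 (S.exists_mem_comp_rX b)⟩

lemma exists_separator (hY : S.IsMaximalSubscheme p Y) {s : S.O p}
    (hs : S.IsSocleElement p Y s) {e : Fin (Module.finrank K (S.kappa p)) → S.O p}
    (he : S.IsResidueBasis p e) (k) :
    ∃ b ∈ S.affineIdeal Y, algebraMap S.Gamma (S.O p) b = e k * s ∧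
      ∀ d : ℤ, (S.mu p (e k * s) : ℤ) ≤ d ↔ b ∈ S.filtration d := by
  have hmem : e k * s ∈ S.stalkKer Y p :=
    hs.span_eq ▸ Ideal.mul_mem_left _ _ (Ideal.mem_span_singleton_self s)
  obtain ⟨b, hb, hbs⟩ := mem_stalkKer_iff.1 hmem
  have hb0 : b ≠ 0 := by
    rintro rfl
    exact he.mul_ne_zero hs.ne_zero k (by rw [← hbs, map_zero])
  exact ⟨b, hb, hbs, fun d => hbs ▸ hY.mu_le_iff hb hb0⟩

lemma isGreatest_muY (hY : S.IsMaximalSubscheme p Y) :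
    IsGreatest {m : ℕ | ∃ s e k, S.IsSocleElement p Y s ∧ S.IsResidueBasis p e ∧
      m = S.mu p (e k * s)} (S.muY p Y) := by
  have hbdd : BddAbove {m : ℕ | ∃ s e k, S.IsSocleElement p Y s ∧ S.IsResidueBasis p e ∧
      m = S.mu p (e k * s)} := by
    refine ⟨S.rX, ?_⟩
    rintro _ ⟨s, e, k, hs, he, rfl⟩
    obtain ⟨b, -, -, hmu⟩ := hY.exists_separator hs he k
    exact Int.ofNat_le.1 ((hmu _).2 (S.mem_filtration_natCast.2 (S.exists_mem_comp_rX b)))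
  obtain ⟨s, hs⟩ := hY.exists_isSocleElement
  obtain ⟨e, he⟩ := exists_isResidueBasis p
  have := finite_residueField K (S.O p)
  exact ⟨Nat.sSup_mem ⟨_, s, e, ⟨0, Module.finrank_pos⟩, hs, he, rfl⟩ hbdd,
    fun m hm => le_csSup hbdd hm⟩

lemma affineIdeal_le_of_forall_mu_le (hY : S.IsMaximalSubscheme p Y) {s : S.O p}
    (hs : S.IsSocleElement p Y s) {e : Fin (Module.finrank K (S.kappa p)) → S.O p}
    (he : S.IsResidueBasis p e) {d : ℤ} (hd : ∀ k, (S.mu p (e k * s) : ℤ) ≤ d) :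
    (S.affineIdeal Y).restrictScalars K ≤ S.filtration d := by
  intro x hx
  choose b hbI hbs hmu using hY.exists_separator hs he
  let V : Submodule K S.Gamma := (S.affineIdeal Y).restrictScalars K ⊓ S.filtration d
  have hbV (k) : b k ∈ V := ⟨hbI k, (hmu k d).1 (hd k)⟩
  have hspan : Submodule.span K (Set.range fun k => e k * s) ≤
      V.map (Algebra.algHom K S.Gamma (S.O p)).toLinearMap := by
    rw [Submodule.span_le]
    rintro _ ⟨k, rfl⟩
    exact ⟨b k, hbV k, hbs k⟩
  have hxs : algebraMap S.Gamma (S.O p) x ∈ Ideal.span {s} :=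
    hs.span_eq ▸ mem_stalkKer_iff.2 ⟨x, hx, rfl⟩
  obtain ⟨a, ha⟩ := Ideal.mem_span_singleton'.1 hxs
  obtain ⟨B, hB⟩ := he
  obtain ⟨y, hyV, hyx⟩ := hspan (mul_mem_span_range_mul hs.socle B hB a)
  exact hY.algebraMap_O_injOn hyV.1 hx (hyx.trans ha) ▸ hyV.2

lemma muY_le_iff (hY : S.IsMaximalSubscheme p Y) {d : ℤ} :
    (S.muY p Y : ℤ) ≤ d ↔ (S.affineIdeal Y).restrictScalars K ≤ S.filtration d := by
  constructor
  · intro hle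
    obtain ⟨s, hs⟩ := hY.exists_isSocleElement
    obtain ⟨e, he⟩ := exists_isResidueBasis p
    exact hY.affineIdeal_le_of_forall_mu_le hs he fun k =>
      (Int.ofNat_le.2 (hY.isGreatest_muY.2 ⟨s, e, k, hs, he, rfl⟩)).trans hle
  · intro hle
    obtain ⟨s, e, k, hs, he, hm⟩ := hY.isGreatest_muY.1
    obtain ⟨b, hb, -, hmu⟩ := hY.exists_separator hs he k
    exact hm ▸ (hmu d).2 (hle hb)

end IsMaximalSubscheme

end Separators

section CayleyBacharach

lemma isCayleyBacharach_iff : S.IsCayleyBacharach ↔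
    ∀ (p : S.Pt) (Y : ProjSubscheme K n), S.IsMaximalSubscheme p Y → S.rX ≤ S.muY p Y := by
  simp only [IsCayleyBacharach, CBP, degP, sub_add_cancel, Int.toNat_natCast, le_iInf_iff,
    Nat.cast_le]

variable {S}

lemma IsMaximalSubscheme.rX_le_muY_iff {p : S.Pt} {Y : ProjSubscheme K n}
    (hY : S.IsMaximalSubscheme p Y) :
    S.rX ≤ S.muY p Y ↔ ¬ (S.affineIdeal Y).restrictScalars K ≤ S.filtration (S.rX - 1) := by
  rw [← hY.muY_le_iff]
  omega

lemma IsHomogeneousTraceMap.image_subset_different_iff {σ : S.Q →ₗ[S.L0] S.L0}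
    (hσ : S.IsHomogeneousTraceMap σ) {Y : ProjSubscheme K n} (hYS : S.ideal ≤ Y.ideal)
    (hatom : IsAtom (S.affineIdeal Y)) :
    (fun f : S.R => ((S.x0Q ^ ((S.rX : ℤ) - 1) : S.Qˣ) : S.Q) * algebraMap S.R S.Q f) ''
        {f | f ∈ S.comp S.rX ∧ f ∈ S.relIdeal Y} ⊆
      {q | q ∈ S.different σ ∧ q ∈ S.compQ (2 * (S.rX : ℤ) - 1)} ↔
    (S.affineIdeal Y).restrictScalars K ≤ S.filtration (S.rX - 1) := by
  obtain ⟨τ, hτ⟩ := hσ.exists_isCoeffwiseExtension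
  have hnd := hσ.nondegenerate hτ
  have hlaurent {f : S.R} (hf : f ∈ S.comp S.rX) :
      S.laurentEquiv (((S.x0Q ^ ((S.rX : ℤ) - 1) : S.Qˣ) : S.Q) * algebraMap S.R S.Q f) =
        LaurentPolynomial.C (S.dehom f) * T (2 * S.rX - 1) := by
    rw [S.laurentEquiv_x0Q_zpow_mul hf]
    congr 2
    ring
  rw [← forall_mul_mem_orthogonal_iff hnd hatom]
  constructor
  · intro h b hb
    obtain ⟨f, hf, rfl⟩ := S.exists_mem_comp_rX b
    exact (hτ.mem_different_iff hnd (hlaurent hf)).1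
      (h ⟨f, ⟨hf, (dehom_mem_affineIdeal_iff hYS hf).1 hb⟩, rfl⟩).1
  · rintro h _ ⟨f, ⟨hf, hfY⟩, rfl⟩
    exact ⟨(hτ.mem_different_iff hnd (hlaurent hf)).2
      (h _ ((dehom_mem_affineIdeal_iff hYS hf).2 hfY)), S.mem_compQ_iff.2 ⟨_, hlaurent hf⟩⟩

end CayleyBacharach

end ZeroDimScheme

end

theorem dedekind_CB_stmt6 {K : Type*} [Field K] {n : ℕ} (S : ZeroDimScheme K n)
    (hS : S.IsLocallyGorenstein) (σ : S.Q →ₗ[S.L0] S.L0) (hσ : S.IsHomogeneousTraceMap σ) :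
    S.IsCayleyBacharach ↔
      ∀ (p : S.Pt) (Y : ProjSubscheme K n), S.IsMaximalSubscheme p Y →
        ¬ ((fun f : S.R => ((S.x0Q ^ ((S.rX : ℤ) - 1) : S.Qˣ) : S.Q) * algebraMap S.R S.Q f) ''
            {f | f ∈ S.comp S.rX ∧ f ∈ S.relIdeal Y} ⊆
          {q | q ∈ S.different σ ∧ q ∈ S.compQ (2 * (S.rX : ℤ) - 1)}) := by
  rw [S.isCayleyBacharach_iff]
  refine forall_congr' fun p => forall_congr' fun Y => forall_congr' fun hY => ?_
  rw [hY.rX_le_muY_iff, hσ.image_subset_different_iff hY.le hY.isAtom_affineIdeal]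
end

section
/- Let $K$ be a field, $P=K[X_0,\dots,X_n]$ the standard graded polynomial ring, and $\mathbb X\subseteq\mathbb P^n_K$ a (non-empty) $0$-dimensional closed subscheme with saturated homogeneous vanishing ideal $I_{\mathbb X}$, homogeneous coordinate ring $R=P/I_{\mathbb X}$ and set of closed points $\operatorname{Supp}(\mathbb X)=\{p_1,\dots,p_s\}$, none of which lies on the hyperplane $\mathcal Z(X_0)$. Let $x_0\in R$ be the residue class of $X_0$. Put $\deg(\mathbb X)=\sum_j\dim_K\mathcal O_{\mathbb X,p_j}$, and let $r_{\mathbb X}$ be the least $i\ge 0$ such that $\dim_K R_j=\deg(\mathbb X)$ for all $j\ge i$. Let $Q^h(R)$ be the localization of $R$ at the homogeneous non-zerodivisors, identified with $\prod_{j=1}^s\mathcal O_{\mathbb X,p_j}[T_j,T_j^{-1}]$ through $f\mapsto(f_{p_1}T_1^i,\dots,f_{p_s}T_s^i)$ for $f\in R_i$, where $f_{p_j}$ is the germ at $p_j$ of the dehomogenization of $f$ with respect to $x_0$; thus $R\subseteq Q^h(R)$. The conductor of $R$ in $\widetilde R=\prod_{j}\mathcal O_{\mathbb X,p_j}[T_j]\subseteq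 Q^h(R)$ is $\mathfrak F_{\widetilde R/R}=\{f\in\widetilde R\mid f\widetilde R\subseteq R\}$. Let $L_0=K[x_0,x_0^{-1}]\subseteq Q^h(R)$. A homogeneous trace map of degree zero of $Q^h(R)/L_0$ is an $L_0$-linear map $\sigma:Q^h(R)\to L_0$, homogeneous of degree zero, such that $\{\sigma\}$ is a basis of the $Q^h(R)$-module $\operatorname{Hom}_{L_0}(Q^h(R),L_0)$, where $(g\cdot\sigma)(q)=\sigma(gq)$. For such $\sigma$ let $\mathfrak C^\sigma_{\mathbb X}$ be the set of all $g\in Q^h(R)$ for which $g\cdot\sigma=\varphi\otimes\mathrm{id}_{L_0}$ for some $\varphi\in\operatorname{Hom}_{K[x_0]}(R,K[x_0])$, that is, $g\cdot\sigma$ extends $\varphi$. The Dedekind different is $\delta^\sigma_{\mathbb X}=\{f\in Q^h(R)\mid f\,\mathfrak C^\sigma_{\mathbb X}\subseteq R\}$, and $\mathbb X$ has minimal Dedekind different if $\delta^\sigma_{\mathbb X}=\bigoplus_{i\ge 2r_{\mathbb X}}R_i$. A maximal $p_j$-subscheme of $\mathbb X$ is a subscheme $\mathbb Y\subseteq\mathbb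 X$ with $\mathcal O_{\mathbb Y,p_k}=\mathcal O_{\mathbb X,p_k}$ for $k\ne j$ and $\deg(\mathbb Y)=\deg(\mathbb X)-\dim_K\kappa(p_j)$, where $\kappa(p_j)$ is the residue field of $\mathcal O_{\mathbb X,p_j}$; the kernel of $\mathcal O_{\mathbb X,p_j}\to\mathcal O_{\mathbb Y,p_j}$ is then generated by a non-zero socle element $s_j$. For $a\in\mathcal O_{\mathbb X,p_j}$ let $\mu(a)=\min\{i\ge 0\mid(0,\dots,0,aT_j^i,0,\dots,0)\in R\}$, and let $\mu_{\mathbb Y/\mathbb X}=\max_k\mu(e_ks_j)$, where $e_1,\dots,e_{\varkappa}\in\mathcal O_{\mathbb X,p_j}$ have residue classes forming a $K$-basis of $\kappa(p_j)$ (this does not depend on the choices). Put $\deg_{\mathbb X}(p_j)=\min\{\mu_{\mathbb Y/\mathbb X}\mid\mathbb Y\text{ a maximal }p_j\text{-subscheme of }\mathbb X\}$. Then $\mathbb X$ is called a Cayley–Bacharach scheme if $\deg_{\mathbb X}(p_j)\ge r_{\mathbb X}$ for all $j$. Assume that $\mathbb X$ is locally Gorenstein, i.e. that every $\mathcal O_{\mathbb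 X,p_j}$ is a Gorenstein ring, and let $\sigma$ be a homogeneous trace map of degree zero of $Q^h(R)/L_0$. Then $\mathbb X$ has minimal Dedekind different if and only if $\mathbb X$ is a Cayley–Bacharach scheme and $\mathfrak F_{\widetilde R/R}^2=\delta^\sigma_{\mathbb X}$. -/
noncomputable section

open scoped LaurentPolynomial

attribute [local instance] MvPolynomial.gradedAlgebra

/-- A `0`-dimensional closed subscheme `𝕏 ⊆ ℙⁿ_K` no point of whose support lies on the
hyperplane `Z(X₀)`, given by its homogeneous vanishing ideal `I_𝕏 ⊆ P = K[X₀,…,Xₙ]`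
(closed subschemes of `ℙⁿ_K` correspond to saturated homogeneous ideals of `P`). -/
structure ZeroDimSubscheme (K : Type*) [Field K] (n : ℕ) where
  /-- the homogeneous vanishing ideal `I_𝕏` -/
  ideal : Ideal (MvPolynomial (Fin (n + 1)) K)
  homogeneous : ideal.IsHomogeneous (MvPolynomial.homogeneousSubmodule (Fin (n + 1)) K)
  saturated : ∀ F : MvPolynomial (Fin (n + 1)) K,
    (∃ N : ℕ, ∀ G ∈ (HomogeneousIdeal.irrelevant
        (MvPolynomial.homogeneousSubmodule (Fin (n + 1)) K)).toIdeal ^ N, G * F ∈ ideal) →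
      F ∈ ideal
  /-- `dim 𝕏 = 0`, that is, the homogeneous coordinate ring has Krull dimension `1` -/
  dim_eq : ringKrullDim (MvPolynomial (Fin (n + 1)) K ⧸ ideal) = 1
  /-- no point of `𝕏` lies on `Z(X₀)` -/
  support_off : ∀ p : ProjectiveSpectrum (MvPolynomial.homogeneousSubmodule (Fin (n + 1)) K),
    ideal ≤ p.asHomogeneousIdeal.toIdeal →
      MvPolynomial.X 0 ∉ p.asHomogeneousIdeal.toIdeal

namespace ZeroDimSubscheme

variable {K : Type*} [Field K] {n : ℕ} (X : ZeroDimSubscheme K n)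

/-! ### The homogeneous coordinate ring -/

/-- The homogeneous coordinate ring `R = P/I_𝕏`. -/
abbrev R : Type _ := MvPolynomial (Fin (n + 1)) K ⧸ X.ideal

/-- The homogeneous component `R_i`. -/
def Rgr (i : ℕ) : Submodule K X.R :=
  (MvPolynomial.homogeneousSubmodule (Fin (n + 1)) K i).map
    (Ideal.Quotient.mkₐ K X.ideal).toLinearMap

/-- The residue class `x₀` of `X₀` in `R`. -/
def x0 : X.R := Ideal.Quotient.mk X.ideal (MvPolynomial.X 0)

/-! ### Points and local rings

As `𝕏` is contained in the affine chart `D₊(X₀)`, it is the affine scheme `Spec Γ`, where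
`Γ = P/(I_𝕏 + (X₀ - 1))` is obtained by dehomogenizing.  Hence the closed points of `𝕏` are the
maximal ideals of `Γ`, and the local rings are the localizations of `Γ` there. -/

/-- The affine coordinate ring `Γ = H⁰(𝕏, 𝒪_𝕏)`. -/
abbrev Gam : Type _ :=
  MvPolynomial (Fin (n + 1)) K ⧸
    (X.ideal ⊔ Ideal.span {(MvPolynomial.X 0 - 1 : MvPolynomial (Fin (n + 1)) K)})

/-- The support `{p₁,…,p_s}`, the set of closed points of `𝕏`. -/
abbrev Supp : Type _ := MaximalSpectrum X.Gam

/-- The local ring `𝒪_{𝕏,p}`. -/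
def O (p : X.Supp) : Type _ := Localization.AtPrime p.asIdeal

instance (p : X.Supp) : CommRing (X.O p) :=
  inferInstanceAs (CommRing (Localization.AtPrime p.asIdeal))

instance (p : X.Supp) : IsLocalRing (X.O p) :=
  inferInstanceAs (IsLocalRing (Localization.AtPrime p.asIdeal))

instance (p : X.Supp) : Algebra X.Gam (X.O p) :=
  inferInstanceAs (Algebra X.Gam (Localization.AtPrime p.asIdeal))

instance (p : X.Supp) : IsLocalization.AtPrime (X.O p) p.asIdeal :=
  inferInstanceAs (IsLocalization.AtPrime (Localization.AtPrime p.asIdeal) p.asIdeal)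

instance (p : X.Supp) : Algebra K (X.O p) :=
  inferInstanceAs (Algebra K (Localization.AtPrime p.asIdeal))

instance (p : X.Supp) : IsScalarTower K X.Gam (X.O p) :=
  inferInstanceAs (IsScalarTower K X.Gam (Localization.AtPrime p.asIdeal))

/-- The germ at `p` of a form, that is, of its dehomogenization with respect to `X₀`. -/
def germ (p : X.Supp) : MvPolynomial (Fin (n + 1)) K →ₐ[K] X.O p :=
  (IsScalarTower.toAlgHom K X.Gam (X.O p)).comp (Ideal.Quotient.mkₐ K _)

/-- `deg(𝕏) = ∑_j dim_K 𝒪_{𝕏,p_j}`. -/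
def deg : ℕ := ∑ᶠ p : X.Supp, Module.finrank K (X.O p)

/-- The regularity index `r_𝕏`: the least `i` with `dim_K R_j = deg(𝕏)` for all `j ≥ i`. -/
def rX : ℕ := sInf {i : ℕ | ∀ j, i ≤ j → Module.finrank K (X.Rgr j) = X.deg}

/-- `𝕏` is locally Gorenstein: every (Noetherian) local ring `𝒪_{𝕏,p}` has finite injective
dimension over itself. -/
def LocallyGorenstein : Prop :=
  ∀ p : X.Supp, ∃ d : ℕ,
    CategoryTheory.HasInjectiveDimensionLE (ModuleCat.of (X.O p) (X.O p)) d

/-! ### The homogeneous ring of quotients -/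

/-- The homogeneous ring of quotients `Q^h(R)`, in the form `∏_j 𝒪_{𝕏,p_j}[T_j, T_j⁻¹]`.
It is shown below that, with the homomorphism `iota`, this is the localization of `R` with respect
to the set of all homogeneous non-zerodivisors. -/
abbrev Q : Type _ := ∀ p : X.Supp, (X.O p)[T;T⁻¹]

/-- The homogeneous component `Q^h(R)_k`, consisting of the elements `(a_j T_j^k)_j`. -/
def Qgr (k : ℤ) : Submodule K X.Q where
  carrier := {q | ∀ p, ∃ a : X.O p, q p = LaurentPolynomial.C a * LaurentPolynomial.T k}
  add_mem' {q q'} h h' p := by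
    obtain ⟨a, ha⟩ := h p
    obtain ⟨b, hb⟩ := h' p
    exact ⟨a + b, by rw [Pi.add_apply, ha, hb, map_add, add_mul]⟩
  zero_mem' p := ⟨0, by simp⟩
  smul_mem' c q h p := by
    obtain ⟨a, ha⟩ := h p
    refine ⟨c • a, ?_⟩
    rw [Pi.smul_apply, ha, ← LaurentPolynomial.single_eq_C_mul_T,
      ← LaurentPolynomial.single_eq_C_mul_T, AddMonoidAlgebra.smul_single]

/-- The map `P → Q^h(R)` that sends a form `F` of degree `i` to `(F_{p_j} T_j^i)_j`. -/
def iotaP : MvPolynomial (Fin (n + 1)) K →ₐ[K] X.Q :=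
  MvPolynomial.aeval fun i p =>
    LaurentPolynomial.C (X.germ p (MvPolynomial.X i)) * LaurentPolynomial.T 1

theorem iotaP_of_isHomogeneous {F : MvPolynomial (Fin (n + 1)) K} {i : ℕ}
    (hF : F.IsHomogeneous i) (p : X.Supp) :
    X.iotaP F p = LaurentPolynomial.C (X.germ p F) * LaurentPolynomial.T i := by
  have hmono : ∀ (d : Fin (n + 1) →₀ ℕ) (c : K),
      X.iotaP (MvPolynomial.monomial d c) p =
        LaurentPolynomial.C (X.germ p (MvPolynomial.monomial d c)) *
          LaurentPolynomial.T (d.degree : ℤ) := by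
    intro d c
    have h1 : X.germ p (MvPolynomial.monomial d c) =
        algebraMap K (X.O p) c * d.prod fun i k => X.germ p (MvPolynomial.X i) ^ k := by
      rw [MvPolynomial.monomial_eq, map_mul, MvPolynomial.algHom_C, Finsupp.prod, map_prod]
      simp [Finsupp.prod]
    rw [h1, iotaP, MvPolynomial.aeval_monomial, Finsupp.prod, Finsupp.prod, Pi.mul_apply,
      Finset.prod_apply, map_mul, map_prod, mul_assoc]
    congr 1
    simp only [Pi.pow_apply, mul_pow, map_pow, Finset.prod_mul_distrib]
    congr 1
    simp only [LaurentPolynomial.T_pow, mul_one, Finsupp.degree_apply]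
    induction d.support using Finset.cons_induction with
    | empty => simp
    | cons a s ha ih =>
      rw [Finset.prod_cons, Finset.sum_cons, ih, Nat.cast_add, LaurentPolynomial.T_add]
  have h2 : ∀ d ∈ F.support, d.degree = i := fun d hd => by
    rw [Finsupp.degree_eq_weight_one]
    exact hF (MvPolynomial.mem_support_iff.1 hd)
  conv_lhs => rw [F.as_sum]
  conv_rhs => rw [F.as_sum]
  rw [map_sum, map_sum, map_sum, Finset.sum_mul, Finset.sum_apply]
  refine Finset.sum_congr rfl fun d hd => ?_
  rw [hmono, h2 d hd]

theorem iotaP_eq_zero (F : MvPolynomial (Fin (n + 1)) K) (hF : F ∈ X.ideal) :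
    X.iotaP F = 0 := by
  rw [← MvPolynomial.sum_homogeneousComponent F, map_sum]
  refine Finset.sum_eq_zero fun i _ => funext fun p => ?_
  rw [X.iotaP_of_isHomogeneous (MvPolynomial.homogeneousComponent_isHomogeneous i F)]
  have h : X.germ p (MvPolynomial.homogeneousComponent i F) = 0 := by
    have h' : Ideal.Quotient.mk (X.ideal ⊔ Ideal.span
        {(MvPolynomial.X 0 - 1 : MvPolynomial (Fin (n + 1)) K)})
        (MvPolynomial.homogeneousComponent i F) = 0 :=
      Ideal.Quotient.eq_zero_iff_mem.2 (Ideal.mem_sup_left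
        (MvPolynomial.homogeneousComponent_mem_of_mem X.homogeneous hF i))
    change algebraMap X.Gam (X.O p) (Ideal.Quotient.mk _ _) = 0
    rw [h', map_zero]
  rw [h, map_zero, zero_mul, Pi.zero_apply]

/-- The homomorphism `R → Q^h(R)`, `f ↦ (f_{p_j} T_j^i)_j` for `f ∈ R_i`. -/
def iota : X.R →ₐ[K] X.Q := Ideal.Quotient.liftₐ X.ideal X.iotaP X.iotaP_eq_zero

instance instAlgebraRQ : Algebra X.R X.Q := X.iota.toRingHom.toAlgebra

instance : IsScalarTower K X.R X.Q :=
  IsScalarTower.of_algebraMap_eq fun c => (X.iota.commutes c).symm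

/-- The subring `K[x₀] ⊆ R`. -/
def Kx0 : Subalgebra K X.R := Algebra.adjoin K {X.x0}

/-- The element `x₀⁻¹ = (T_j⁻¹)_j` of `Q^h(R)`. -/
def x0inv : X.Q := fun _ => LaurentPolynomial.T (-1)

theorem mk_X0_Gam : Ideal.Quotient.mk (X.ideal ⊔ Ideal.span
    {(MvPolynomial.X 0 - 1 : MvPolynomial (Fin (n + 1)) K)}) (MvPolynomial.X 0) = 1 := by
  rw [← map_one (Ideal.Quotient.mk _), Ideal.Quotient.eq]
  exact Ideal.mem_sup_right (Ideal.subset_span rfl)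

theorem germ_X0 (p : X.Supp) : X.germ p (MvPolynomial.X 0) = 1 := by
  change algebraMap X.Gam (X.O p) (Ideal.Quotient.mk _ _) = 1
  rw [mk_X0_Gam, map_one]

theorem x0_mul_x0inv : algebraMap X.R X.Q X.x0 * X.x0inv = 1 := by
  funext p
  change X.iotaP (MvPolynomial.X 0) p * LaurentPolynomial.T (-1) = 1
  rw [X.iotaP_of_isHomogeneous (MvPolynomial.isHomogeneous_X K 0), germ_X0, map_one, one_mul,
    ← LaurentPolynomial.T_add]
  simp

/-- The subring `L₀ = K[x₀, x₀⁻¹] ⊆ Q^h(R)`. -/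
def L0 : Subalgebra K X.Q := Algebra.adjoin K {algebraMap X.R X.Q X.x0, X.x0inv}

/-! ### `Q` is the homogeneous ring of quotients of `R` -/

theorem irrelevant_pow_le : ∃ N : ℕ,
    (HomogeneousIdeal.irrelevant (MvPolynomial.homogeneousSubmodule (Fin (n + 1)) K)).toIdeal ^ N ≤
      X.ideal ⊔ Ideal.span {(MvPolynomial.X 0 : MvPolynomial (Fin (n + 1)) K)} := by
  refine Ideal.exists_pow_le_of_le_radical_of_fg ?_ (IsNoetherian.noetherian _)
  have hJ : (X.ideal ⊔ Ideal.span
      {(MvPolynomial.X 0 : MvPolynomial (Fin (n + 1)) K)}).IsHomogeneous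
      (MvPolynomial.homogeneousSubmodule (Fin (n + 1)) K) :=
    X.homogeneous.sup (Ideal.homogeneous_span _ _ (by
      rintro x rfl
      exact ⟨1, MvPolynomial.isHomogeneous_X K 0⟩))
  rw [hJ.radical_eq]
  refine le_sInf ?_
  rintro J ⟨hh, hle, hp⟩
  by_contra hn
  exact X.support_off ⟨⟨J, hh⟩, hp, hn⟩ (le_sup_left.trans hle)
    (hle (Ideal.mem_sup_right (Ideal.subset_span rfl)))

theorem mem_of_X0_mul_mem {F : MvPolynomial (Fin (n + 1)) K}
    (hF : MvPolynomial.X 0 * F ∈ X.ideal) : F ∈ X.ideal := by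
  obtain ⟨N, hN⟩ := X.irrelevant_pow_le
  refine X.saturated F ⟨N, fun G hG => ?_⟩
  obtain ⟨a, ha, b, hb, rfl⟩ := Submodule.mem_sup.1 (hN hG)
  obtain ⟨c, rfl⟩ := Ideal.mem_span_singleton'.1 hb
  rw [add_mul, mul_assoc]
  exact add_mem (Ideal.mul_mem_right _ _ ha) (Ideal.mul_mem_left _ _ hF)

theorem mem_of_X0_pow_mul_mem {F : MvPolynomial (Fin (n + 1)) K} (k : ℕ)
    (hF : MvPolynomial.X 0 ^ k * F ∈ X.ideal) : F ∈ X.ideal := by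
  induction k with
  | zero => simpa using hF
  | succ k ih => exact ih (X.mem_of_X0_mul_mem (by rwa [← mul_assoc, ← pow_succ']))

theorem homogeneousComponent_succ_X0_mul (b : MvPolynomial (Fin (n + 1)) K) (i : ℕ) :
    MvPolynomial.homogeneousComponent (i + 1) (MvPolynomial.X 0 * b) =
      MvPolynomial.X 0 * MvPolynomial.homogeneousComponent i b := by
  have h : ∀ c : MvPolynomial (Fin (n + 1)) K, ∀ j, c.IsHomogeneous j →
      MvPolynomial.homogeneousComponent (i + 1) (MvPolynomial.X 0 * c) =
        MvPolynomial.X 0 * MvPolynomial.homogeneousComponent i c := by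
    intro c j hc
    have h1 : (MvPolynomial.X 0 * c : MvPolynomial (Fin (n + 1)) K).IsHomogeneous (j + 1) := by
      have := (MvPolynomial.isHomogeneous_X K (0 : Fin (n + 1))).mul hc
      rwa [add_comm 1 j] at this
    rw [MvPolynomial.homogeneousComponent_of_mem h1, MvPolynomial.homogeneousComponent_of_mem hc]
    by_cases hij : i = j <;> simp [hij]
  conv_lhs => rw [← MvPolynomial.sum_homogeneousComponent b]
  conv_rhs => rw [← MvPolynomial.sum_homogeneousComponent b]
  rw [Finset.mul_sum, map_sum, map_sum, Finset.mul_sum]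
  exact Finset.sum_congr rfl fun j _ =>
    h _ j (MvPolynomial.homogeneousComponent_isHomogeneous j b)

theorem homogeneousComponent_zero_X0_mul (b : MvPolynomial (Fin (n + 1)) K) :
    MvPolynomial.homogeneousComponent 0 (MvPolynomial.X 0 * b) = 0 := by
  classical
  rw [MvPolynomial.homogeneousComponent_zero, MvPolynomial.coeff_X_mul']
  simp

/-- A form whose dehomogenization vanishes on `𝕏` lies in `I_𝕏`. -/
theorem mem_of_isHomogeneous {F : MvPolynomial (Fin (n + 1)) K} {i : ℕ} (hF : F.IsHomogeneous i)
    (h : F ∈ X.ideal ⊔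
      Ideal.span {(MvPolynomial.X 0 - 1 : MvPolynomial (Fin (n + 1)) K)}) : F ∈ X.ideal := by
  obtain ⟨a, ha, b', hb, hab⟩ := Submodule.mem_sup.1 h
  obtain ⟨b, rfl⟩ := Ideal.mem_span_singleton.1 hb
  have hcomp := fun j => MvPolynomial.homogeneousComponent_mem_of_mem X.homogeneous ha j
  have key : ∀ j, MvPolynomial.homogeneousComponent j b = MvPolynomial.homogeneousComponent j a +
      MvPolynomial.homogeneousComponent j (MvPolynomial.X 0 * b) -
        MvPolynomial.homogeneousComponent j F := by
    intro j
    rw [← map_add, ← map_sub, ← hab]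
    congr 1; ring
  have hF' := fun j => MvPolynomial.homogeneousComponent_of_mem (m := j) hF
  have h1 : ∀ j, j < i → MvPolynomial.homogeneousComponent j b ∈ X.ideal := by
    intro j
    induction j with
    | zero =>
      intro hj
      rw [key, homogeneousComponent_zero_X0_mul, hF', if_neg hj.ne, sub_zero, add_zero]
      exact hcomp 0
    | succ j ih =>
      intro hj
      rw [key, homogeneousComponent_succ_X0_mul, hF', if_neg hj.ne, sub_zero]
      exact add_mem (hcomp _) (Ideal.mul_mem_left _ _ (ih (by omega)))
  have h2 : ∀ k, MvPolynomial.homogeneousComponent (i + k) b + MvPolynomial.X 0 ^ k * F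
      ∈ X.ideal := by
    intro k
    induction k with
    | zero =>
      rw [add_zero, key, hF', if_pos rfl, pow_zero, one_mul, sub_add_cancel]
      refine add_mem (hcomp _) ?_
      cases i with
      | zero => rw [homogeneousComponent_zero_X0_mul]; exact zero_mem _
      | succ i =>
        rw [homogeneousComponent_succ_X0_mul]
        exact Ideal.mul_mem_left _ _ (h1 i (by omega))
    | succ k ih =>
      rw [← add_assoc, key, homogeneousComponent_succ_X0_mul, hF', if_neg (by omega), sub_zero,
        pow_succ', add_assoc, mul_assoc, ← mul_add]
      exact add_mem (hcomp _) (Ideal.mul_mem_left _ _ ih)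
  have h3 := h2 (b.totalDegree + 1)
  rw [MvPolynomial.homogeneousComponent_eq_zero _ _ (by omega), zero_add] at h3
  exact X.mem_of_X0_pow_mul_mem _ h3

/-- Every element of `Γ` is the dehomogenization of a form. -/
theorem exists_form (a : X.Gam) : ∃ (d : ℕ) (F : MvPolynomial (Fin (n + 1)) K),
    F.IsHomogeneous d ∧ Ideal.Quotient.mk _ F = a := by
  obtain ⟨G, rfl⟩ := Ideal.Quotient.mk_surjective a
  refine ⟨G.totalDegree, ∑ i ∈ Finset.range (G.totalDegree + 1),
    MvPolynomial.X 0 ^ (G.totalDegree - i) * MvPolynomial.homogeneousComponent i G,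
    MvPolynomial.IsHomogeneous.sum _ _ _ fun i hi => ?_, ?_⟩
  · have h := ((MvPolynomial.isHomogeneous_X K (0 : Fin (n + 1))).pow (G.totalDegree - i)).mul
      (MvPolynomial.homogeneousComponent_isHomogeneous i G)
    rw [one_mul, Nat.sub_add_cancel (Nat.lt_succ_iff.1 (Finset.mem_range.1 hi))] at h
    exact h
  · conv_rhs => rw [← MvPolynomial.sum_homogeneousComponent G]
    rw [map_sum, map_sum]
    refine Finset.sum_congr rfl fun i _ => ?_
    rw [map_mul, map_pow, mk_X0_Gam, one_pow, one_mul]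

instance : Module.Finite K X.Gam := by
  obtain ⟨N, hN⟩ := X.irrelevant_pow_le
  have hle : ∀ F : MvPolynomial (Fin (n + 1)) K, ∀ i, F.IsHomogeneous i →
      ∃ G ∈ MvPolynomial.restrictTotalDegree (Fin (n + 1)) K N,
        (Ideal.Quotient.mk _ F : X.Gam) = Ideal.Quotient.mk _ G := by
    intro F i hF
    induction i generalizing F with
    | zero => exact ⟨F, (MvPolynomial.mem_restrictTotalDegree _ _ _).2
        (hF.totalDegree_le.trans (Nat.zero_le _)), rfl⟩
    | succ i ih =>
      by_cases hi : i + 1 ≤ N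
      · exact ⟨F, (MvPolynomial.mem_restrictTotalDegree _ _ _).2
          (hF.totalDegree_le.trans hi), rfl⟩
      · have hFN : F ∈ (HomogeneousIdeal.irrelevant
            (MvPolynomial.homogeneousSubmodule (Fin (n + 1)) K)).toIdeal ^ N := by
          have h1 : F ∈ Ideal.span (Set.range (MvPolynomial.X (R := K) (σ := Fin (n + 1)))) ^
              (i + 1) := by
            rw [Ideal.span_pow_eq_map_homogeneousSubmodule]
            refine ⟨MvPolynomial.map MvPolynomial.C F, hF.map _, ?_⟩
            simp only [AlgHom.toLinearMap_apply, MvPolynomial.aeval_def,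
              MvPolynomial.eval₂_map, Algebra.algebraMap_self, RingHom.id_comp]
            exact MvPolynomial.eval₂_eta F
          refine Ideal.pow_right_mono ?_ N (Ideal.pow_le_pow_right (by omega) h1)
          rw [Ideal.span_le]
          rintro _ ⟨j, rfl⟩
          exact HomogeneousIdeal.mem_irrelevant_of_mem _ one_pos
            (MvPolynomial.isHomogeneous_X K j)
        obtain ⟨a, ha, b', hb, hab⟩ := Submodule.mem_sup.1 (hN hFN)
        obtain ⟨b, rfl⟩ := Ideal.mem_span_singleton.1 hb
        obtain ⟨G, hG, hG'⟩ := ih _ (MvPolynomial.homogeneousComponent_isHomogeneous i b)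
        refine ⟨G, hG, hG' ▸ ?_⟩
        have h2 : F = MvPolynomial.homogeneousComponent (i + 1) a +
            MvPolynomial.X 0 * MvPolynomial.homogeneousComponent i b := by
          rw [← homogeneousComponent_succ_X0_mul, ← map_add, hab,
            MvPolynomial.homogeneousComponent_eq_self hF]
        rw [h2, map_add, map_mul, mk_X0_Gam, one_mul, Ideal.Quotient.eq_zero_iff_mem.2
          (Ideal.mem_sup_left
            (MvPolynomial.homogeneousComponent_mem_of_mem X.homogeneous ha (i + 1))), zero_add]
  have : FiniteDimensional K (MvPolynomial.restrictTotalDegree (Fin (n + 1)) K N) :=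
    inferInstance
  refine Module.Finite.of_surjective ((Ideal.Quotient.mkₐ K (X.ideal ⊔ Ideal.span
    {(MvPolynomial.X 0 - 1 : MvPolynomial (Fin (n + 1)) K)})).toLinearMap.comp
      (MvPolynomial.restrictTotalDegree (Fin (n + 1)) K N).subtype) fun a => ?_
  obtain ⟨d, F, hF, rfl⟩ := X.exists_form a
  obtain ⟨G, hG, h⟩ := hle F d hF
  exact ⟨⟨G, hG⟩, h.symm⟩

instance : IsArtinianRing X.Gam := IsArtinianRing.of_finite K X.Gam

instance : Finite X.Supp := inferInstance

/-- `Γ = ∏_j 𝒪_{𝕏,p_j}`. -/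
theorem toPi_bijective : Function.Bijective
    (fun (a : X.Gam) (p : X.Supp) => algebraMap X.Gam (X.O p) a) :=
  ⟨MaximalSpectrum.toPiLocalization_injective X.Gam,
    PrimeSpectrum.maximalSpectrumToPiLocalization_surjective_of_discreteTopology X.Gam⟩

/-- The multiplicative set of homogeneous non-zerodivisors of `R`. -/
def homogeneousNonZeroDivisors : Submonoid X.R where
  carrier := {f | f ∈ nonZeroDivisors X.R ∧ ∃ i, f ∈ X.Rgr i}
  one_mem' := ⟨one_mem _, 0, 1, MvPolynomial.isHomogeneous_one _ _,
    map_one (Ideal.Quotient.mk X.ideal)⟩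
  mul_mem' := by
    rintro _ _ ⟨h, i, F, hF, rfl⟩ ⟨h', j, G, hG, rfl⟩
    exact ⟨mul_mem h h', i + j, F * G, MvPolynomial.IsHomogeneous.mul hF hG,
      map_mul (Ideal.Quotient.mk X.ideal) F G⟩

theorem mem_ideal_of_germ {F : MvPolynomial (Fin (n + 1)) K} {i : ℕ} (hF : F.IsHomogeneous i)
    (h : ∀ p, X.germ p F = 0) : F ∈ X.ideal := by
  refine X.mem_of_isHomogeneous hF (Ideal.Quotient.eq_zero_iff_mem.1 (X.toPi_bijective.1 ?_))
  funext p
  exact (h p).trans (map_zero (algebraMap X.Gam (X.O p))).symm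

theorem iota_injective : Function.Injective (algebraMap X.R X.Q) := by
  rw [injective_iff_map_eq_zero]
  intro f hf
  obtain ⟨F, rfl⟩ := Ideal.Quotient.mk_surjective f
  rw [Ideal.Quotient.eq_zero_iff_mem, MvPolynomial.mem_iff_homogeneousComponent_mem X.homogeneous]
  intro i
  refine X.mem_ideal_of_germ (MvPolynomial.homogeneousComponent_isHomogeneous i F) fun p => ?_
  by_cases hi : i ∈ Finset.range (F.totalDegree + 1)
  · have h1 : X.iotaP F p = 0 := congr_fun hf p
    rw [← MvPolynomial.sum_homogeneousComponent F, map_sum, Finset.sum_apply] at h1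
    have h2 := congr_arg (fun q => AddMonoidAlgebra.coeff q (i : ℤ)) h1
    simp only [X.iotaP_of_isHomogeneous (MvPolynomial.homogeneousComponent_isHomogeneous _ F),
      ← LaurentPolynomial.single_eq_C_mul_T, AddMonoidAlgebra.coeff_sum,
      AddMonoidAlgebra.coeff_single, Finsupp.finsetSum_apply, Finsupp.single_apply,
      Nat.cast_inj, Finset.sum_ite_eq', hi, if_true, AddMonoidAlgebra.coeff_zero,
      Finsupp.coe_zero, Pi.zero_apply] at h2
    exact h2
  · rw [MvPolynomial.homogeneousComponent_eq_zero _ _ (by simpa using hi), map_zero]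

theorem iotaP_X0_pow (k : ℕ) (p : X.Supp) :
    X.iotaP (MvPolynomial.X 0 ^ k) p = LaurentPolynomial.T k := by
  have h := (MvPolynomial.isHomogeneous_X K (0 : Fin (n + 1))).pow k
  rw [one_mul] at h
  rw [X.iotaP_of_isHomogeneous h, map_pow, germ_X0, one_pow, map_one, one_mul]

theorem x0_pow_mem (k : ℕ) : X.x0 ^ k ∈ X.homogeneousNonZeroDivisors := by
  suffices h : X.x0 ∈ nonZeroDivisors X.R from
    Submonoid.pow_mem _ (show X.x0 ∈ X.homogeneousNonZeroDivisors from
      ⟨h, 1, MvPolynomial.X 0, MvPolynomial.isHomogeneous_X K 0, rfl⟩) k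
  refine mem_nonZeroDivisors_of_injective X.iota_injective ?_
  exact (IsUnit.of_mul_eq_one _ X.x0_mul_x0inv).mem_nonZeroDivisors

/-- The algebra `∏_j 𝒪_{𝕏,p_j}[T_j, T_j⁻¹]` is the localization of `R` with respect to the set of
all homogeneous non-zerodivisors. -/
instance : IsLocalization X.homogeneousNonZeroDivisors X.Q := by
  classical
  rw [isLocalization_iff]
  refine ⟨?_, ?_, ?_⟩
  · rintro ⟨_, h, i, F, hF, rfl⟩
    have hu : IsUnit (Ideal.Quotient.mk _ F : X.Gam) := by
      refine IsArtinianRing.isUnit_of_mem_nonZeroDivisors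
        (mem_nonZeroDivisors_iff_right.2 fun a ha => ?_)
      obtain ⟨d, G, hG, rfl⟩ := X.exists_form a
      rw [← map_mul, Ideal.Quotient.eq_zero_iff_mem] at ha
      have h1 := X.mem_of_isHomogeneous (hG.mul hF) ha
      have h2 : (Ideal.Quotient.mk X.ideal G) = 0 := by
        refine (mem_nonZeroDivisors_iff_right.1 h) _ ?_
        exact (map_mul _ _ _).symm.trans (Ideal.Quotient.eq_zero_iff_mem.2 h1)
      exact Ideal.Quotient.eq_zero_iff_mem.2
        (Ideal.mem_sup_left (Ideal.Quotient.eq_zero_iff_mem.1 h2))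
    rw [Pi.isUnit_iff]
    intro p
    change IsUnit (X.iotaP F p)
    rw [X.iotaP_of_isHomogeneous hF]
    exact ((hu.map (algebraMap X.Gam (X.O p))).map LaurentPolynomial.C).mul
      (LaurentPolynomial.isUnit_T _)
  · have key : ∀ z : X.Q, ∃ k : ℕ, ∃ x : X.R,
        z * algebraMap X.R X.Q (X.x0 ^ k) = algebraMap X.R X.Q x := by
      have hadd : ∀ z w : X.Q,
          (∃ k : ℕ, ∃ x : X.R, z * algebraMap X.R X.Q (X.x0 ^ k) = algebraMap X.R X.Q x) →
          (∃ k : ℕ, ∃ x : X.R, w * algebraMap X.R X.Q (X.x0 ^ k) = algebraMap X.R X.Q x) →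
          ∃ k : ℕ, ∃ x : X.R, (z + w) * algebraMap X.R X.Q (X.x0 ^ k) = algebraMap X.R X.Q x := by
        rintro z w ⟨k, x, hx⟩ ⟨l, y, hy⟩
        refine ⟨k + l, x * X.x0 ^ l + y * X.x0 ^ k, ?_⟩
        rw [map_add, map_mul, map_mul, ← hx, ← hy, pow_add, map_mul]
        ring
      have hsingle : ∀ (p : X.Supp) (q : (X.O p)[T;T⁻¹]), ∃ k : ℕ, ∃ x : X.R,
          (Pi.single p q : X.Q) * algebraMap X.R X.Q (X.x0 ^ k) = algebraMap X.R X.Q x := by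
        intro p q
        induction q using LaurentPolynomial.induction_on' with
        | add q q' h h' => rw [Pi.single_add]; exact hadd _ _ h h'
        | C_mul_T m a =>
          obtain ⟨b, hb⟩ := X.toPi_bijective.2 (Pi.single p a)
          obtain ⟨d, F, hF, rfl⟩ := X.exists_form b
          have hg : ∀ p', X.germ p' F = (Pi.single p a : ∀ p, X.O p) p' := congr_fun hb
          refine ⟨d + m.natAbs, Ideal.Quotient.mk _ (MvPolynomial.X 0 ^ (m.natAbs + m).toNat * F),
            ?_⟩
          funext p'
          change (Pi.single p _ : X.Q) p' * (X.iota (Ideal.Quotient.mk _ (MvPolynomial.X 0) ^ _)) p'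
            = X.iotaP _ p'
          rw [← map_pow]
          change (Pi.single p _ : X.Q) p' * X.iotaP _ p' = X.iotaP _ p'
          rw [iotaP_X0_pow, map_mul, Pi.mul_apply, iotaP_X0_pow, X.iotaP_of_isHomogeneous hF, hg]
          by_cases hp : p' = p
          · subst hp
            rw [Pi.single_eq_same, Pi.single_eq_same, mul_assoc,
              mul_left_comm (LaurentPolynomial.T _) (LaurentPolynomial.C a),
              ← LaurentPolynomial.T_add, ← LaurentPolynomial.T_add]
            congr 2
            rw [Int.toNat_of_nonneg (by omega)]
            push_cast
            ring
          · simp [Pi.single_eq_of_ne hp]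
      intro z
      have := Fintype.ofFinite X.Supp
      rw [← Finset.univ_sum_single z]
      refine Finset.sum_induction _ (fun z => ∃ k : ℕ, ∃ x : X.R,
        z * algebraMap X.R X.Q (X.x0 ^ k) = algebraMap X.R X.Q x) hadd
        ⟨0, 0, by simp⟩ fun p _ => hsingle p (z p)
    intro z
    obtain ⟨k, x, h⟩ := key z
    exact ⟨(x, ⟨_, X.x0_pow_mem k⟩), h⟩
  · intro x y h
    exact ⟨1, by rw [X.iota_injective h]⟩

/-! ### The conductor -/

/-- The subring `R̃ = ∏_j 𝒪_{𝕏,p_j}[T_j] ⊆ Q^h(R)`. -/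
def Rtilde : Subring X.Q :=
  (RingHom.pi fun p => (Polynomial.toLaurent (R := X.O p)).comp
    (Pi.evalRingHom (fun p : X.Supp => Polynomial (X.O p)) p)).range

theorem algebraMap_mem_Rtilde (f : X.R) : algebraMap X.R X.Q f ∈ X.Rtilde := by
  obtain ⟨F, rfl⟩ := Ideal.Quotient.mk_surjective f
  change X.iotaP F ∈ X.Rtilde
  rw [← MvPolynomial.sum_homogeneousComponent F, map_sum]
  refine sum_mem fun i _ => ⟨fun p => Polynomial.C
    (X.germ p (MvPolynomial.homogeneousComponent i F)) * Polynomial.X ^ i, funext fun p => ?_⟩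
  rw [X.iotaP_of_isHomogeneous (MvPolynomial.homogeneousComponent_isHomogeneous i F)]
  exact Polynomial.toLaurent_C_mul_X_pow _ _

/-- The conductor `𝔉_{R̃/R} = {f ∈ R̃ | f·R̃ ⊆ R}`, as an `R`-submodule of `Q^h(R)`. -/
def conductor : Submodule X.R X.Q where
  carrier := {f | f ∈ X.Rtilde ∧ ∀ g ∈ X.Rtilde, f * g ∈ (algebraMap X.R X.Q).range}
  add_mem' h h' := ⟨add_mem h.1 h'.1, fun g hg => by
    rw [add_mul]; exact add_mem (h.2 g hg) (h'.2 g hg)⟩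
  zero_mem' := ⟨zero_mem _, fun g _ => by rw [zero_mul]; exact zero_mem _⟩
  smul_mem' r f h := by
    rw [Algebra.smul_def]
    exact ⟨mul_mem (X.algebraMap_mem_Rtilde r) h.1, fun g hg => by
      rw [mul_assoc]; exact mul_mem ⟨r, rfl⟩ (h.2 g hg)⟩

/-! ### The Dedekind complementary module and the Dedekind different -/

/-- The element `g·σ` of the `Q^h(R)`-module `Hom_{L₀}(Q^h(R), L₀)`, `(g·σ)(q) = σ(g q)`. -/
def traceMul (σ : X.Q →ₗ[X.L0] X.L0) (g : X.Q) : X.Q →ₗ[X.L0] X.L0 :=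
  σ ∘ₗ LinearMap.mulLeft X.L0 g

/-- `σ` is a homogeneous trace map of degree zero of `Q^h(R)/L₀`: it is homogeneous of degree
zero, and `{σ}` is a basis of the `Q^h(R)`-module `Hom_{L₀}(Q^h(R), L₀)`. -/
structure IsTraceMap (σ : X.Q →ₗ[X.L0] X.L0) : Prop where
  degree_zero : ∀ (k : ℤ), ∀ q ∈ X.Qgr k, (σ q : X.Q) ∈ X.Qgr k
  basis : Function.Bijective (X.traceMul σ)

/-- `ψ = φ ⊗ id_{L₀}` for `φ : R → K[x₀]` and `ψ : Q^h(R) → L₀`, where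
`Q^h(R) = R ⊗_{K[x₀]} L₀`: the `L₀`-linear map `ψ` extends the `K[x₀]`-linear map `φ`. -/
def IsExtension (φ : X.R →ₗ[X.Kx0] X.Kx0) (ψ : X.Q →ₗ[X.L0] X.L0) : Prop :=
  ∀ f : X.R, (ψ (algebraMap X.R X.Q f) : X.Q) = algebraMap X.R X.Q (φ f)

/-- The Dedekind complementary module `𝔠^σ_𝕏`: the set of all `g = Σ⁻¹(φ ⊗ id_{L₀})`, that is,
`g·σ = φ ⊗ id_{L₀}`, with `φ ∈ ω_R(1) = Hom_{K[x₀]}(R, K[x₀])`. -/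
def complementary (σ : X.Q →ₗ[X.L0] X.L0) : Set X.Q :=
  {g | ∃ φ : X.R →ₗ[X.Kx0] X.Kx0, X.IsExtension φ (X.traceMul σ g)}

/-- The Dedekind different `δ^σ_𝕏 = {f ∈ Q^h(R) | f·𝔠^σ_𝕏 ⊆ R}`. -/
def different (σ : X.Q →ₗ[X.L0] X.L0) : Submodule X.R X.Q where
  carrier := {f | ∀ g ∈ X.complementary σ, f * g ∈ (algebraMap X.R X.Q).range}
  add_mem' h h' g hg := by
    rw [add_mul]; exact add_mem (h g hg) (h' g hg)
  zero_mem' g _ := by rw [zero_mul]; exact zero_mem _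
  smul_mem' r f h g hg := by
    rw [Algebra.smul_def, mul_assoc]; exact mul_mem ⟨r, rfl⟩ (h g hg)

/-- `𝕏` has minimal Dedekind different: `δ^σ_𝕏 = ⊕_{i ≥ 2 r_𝕏} R_i`. -/
def MinimalDedekindDifferent (σ : X.Q →ₗ[X.L0] X.L0) : Prop :=
  (X.different σ).restrictScalars K =
    (⨆ (i : ℕ) (_ : 2 * X.rX ≤ i), X.Rgr i).map X.iota.toLinearMap

/-! ### Separators and the Cayley–Bacharach property -/

/-- The ideals `𝔟 ⊆ 𝒪_{𝕏,p}` defining the maximal `p`-subschemes `𝕐 ⊆ 𝕏`.  A `p`-subscheme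
agrees with `𝕏` at all other points and has local ring `𝒪_{𝕐,p} = 𝒪_{𝕏,p}/𝔟` at `p`; it is
maximal if `deg(𝕐) = deg(𝕏) - dim_K κ(p)`, that is,
`dim_K 𝒪_{𝕐,p} + dim_K κ(p) = dim_K 𝒪_{𝕏,p}`. -/
def IsMaximalSubscheme (p : X.Supp) (b : Ideal (X.O p)) : Prop :=
  Module.finrank K (X.O p ⧸ b) + Module.finrank K (IsLocalRing.ResidueField (X.O p)) =
    Module.finrank K (X.O p)

/-- `s` is a socle element of `𝒪_{𝕏,p}` corresponding to the `p`-subscheme given by `b`. -/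
def IsSocleGenerator (p : X.Supp) (b : Ideal (X.O p)) (s : X.O p) : Prop :=
  s ≠ 0 ∧ (∀ a ∈ IsLocalRing.maximalIdeal (X.O p), a * s = 0) ∧ b = Ideal.span {s}

open Classical in
/-- `μ(a) = min {i | (0,…,0,a T_j^i,0,…,0) ∈ R}` for `a ∈ 𝒪_{𝕏,p_j}`. -/
def mu (p : X.Supp) (a : X.O p) : ℕ :=
  sInf {i : ℕ | (Pi.single p (LaurentPolynomial.C a * LaurentPolynomial.T (i : ℤ)) : X.Q) ∈
    (algebraMap X.R X.Q).range}

/-- `m = μ_{𝕐/𝕏}` is the maximal degree of a minimal separator of the maximal `p`-subscheme `𝕐`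
given by `b`: for a socle element `s` corresponding to `𝕐` and elements `e_1,…,e_ϰ` whose residue
classes form a `K`-basis of `κ(p)`, it is the maximum of the degrees `μ(e_k s)` of the minimal
separators (the value does not depend on these choices). -/
def IsMaxSeparatorDegree (p : X.Supp) (b : Ideal (X.O p)) (m : ℕ) : Prop :=
  ∃ (s : X.O p) (ϰ : ℕ) (e : Fin ϰ → X.O p),
    X.IsSocleGenerator p b s ∧
    LinearIndependent K (fun k => IsLocalRing.residue (X.O p) (e k)) ∧
    Submodule.span K (Set.range fun k => IsLocalRing.residue (X.O p) (e k)) = ⊤ ∧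
    m = Finset.univ.sup fun k => X.mu p (e k * s)

/-- `deg_𝕏(p) = min {μ_{𝕐/𝕏} | 𝕐 a maximal p-subscheme of 𝕏}`. -/
def degPt (p : X.Supp) : ℕ :=
  sInf {m : ℕ | ∃ b : Ideal (X.O p), X.IsMaximalSubscheme p b ∧ X.IsMaxSeparatorDegree p b m}

/-- `𝕏` is a Cayley–Bacharach scheme: `deg_𝕏(p) ≥ r_𝕏` for every point `p` of the support. -/
def CayleyBacharach : Prop := ∀ p : X.Supp, X.rX ≤ X.degPt p

end ZeroDimSubscheme

end

/-!
Everything in sight is governed by the order filtration on `Q^h(R)`: write `Q_{≥m}` for the elements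
all of whose homogeneous components have degree `≥ m`. Then `R̃ = Q_{≥0}`, and
`⊕_{i ≥ m} R_i = Q_{≥m}` as soon as `m ≥ r_𝕏`, because `R_i` is then all of `∏_j 𝒪_{𝕏,p_j} T_j^i`.
In particular `Q_{≥r_𝕏} ⊆ 𝔉`, and the Cayley–Bacharach property says exactly that equality holds,
in which case `𝔉² = Q_{≥2r_𝕏}`. So the theorem reduces to deducing `𝔉 ⊆ Q_{≥r_𝕏}` from
`δ^σ = Q_{≥2r_𝕏}`. Since `σ` is non-degenerate and maps `𝔠^σ · Q_{≥r_𝕏}` into `R`, the module `𝔠^σ`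
lies in `Q_{≥-r_𝕏}`; hence `𝔉 · Q_{≥r_𝕏} · 𝔠^σ ⊆ 𝔉 · R̃ ⊆ R`, i.e. `𝔉 · Q_{≥r_𝕏} ⊆ δ^σ`.
-/

noncomputable section

open scoped LaurentPolynomial

/-- The product `∏ᵢ Aᵢ[T, T⁻¹]` of Laurent polynomial rings, graded by the exponent of `T`. -/
abbrev PiLaurent {ι : Type*} (A : ι → Type*) [∀ i, CommSemiring (A i)] : Type _ := ∀ i, (A i)[T;T⁻¹]

namespace PiLaurent

variable {ι : Type*} {A : ι → Type*} [∀ i, CommSemiring (A i)]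
variable (K : Type*) [CommSemiring K] [∀ i, Algebra K (A i)]

/-- The homogeneous element `(aᵢ Tᵏ)ᵢ`, as a `K`-linear function of `a`. -/
def monomial (k : ℤ) : (∀ i, A i) →ₗ[K] PiLaurent A :=
  LinearMap.pi fun i => AddMonoidAlgebra.lsingle k ∘ₗ LinearMap.proj i

/-- The tuple of coefficients of `Tᵏ`, as a `K`-linear map. -/
def coeff (k : ℤ) : PiLaurent A →ₗ[K] ∀ i, A i :=
  LinearMap.pi fun i =>
    Finsupp.lapply k ∘ₗ (AddMonoidAlgebra.coeffLinearEquiv K).toLinearMap ∘ₗ LinearMap.proj i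

/-- The filtration by order: the elements whose homogeneous components all have degree `≥ m`. -/
def orderGE (m : ℤ) : Submodule K (PiLaurent A) :=
  ⨅ (k : ℤ) (_ : k < m), LinearMap.ker (coeff K k)

variable {K}

theorem monomial_apply (k : ℤ) (a : ∀ i, A i) (i : ι) :
    monomial K k a i = AddMonoidAlgebra.single k (a i) := rfl

theorem coeff_apply (k : ℤ) (q : PiLaurent A) (i : ι) :
    coeff K k q i = AddMonoidAlgebra.coeff (q i) k := rfl

theorem mem_orderGE {m : ℤ} {q : PiLaurent A} :
    q ∈ orderGE K m ↔ ∀ k < m, coeff K k q = 0 := by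
  simp only [orderGE, Submodule.mem_iInf, LinearMap.mem_ker]

theorem ext_coeff {q q' : PiLaurent A} (h : ∀ k, coeff K k q = coeff K k q') : q = q' :=
  funext fun i => LaurentPolynomial.ext fun k => congr_fun (h k) i

theorem monomial_zero_one : monomial K 0 (1 : ∀ i, A i) = 1 := rfl

theorem monomial_mul_monomial (k l : ℤ) (a b : ∀ i, A i) :
    monomial K k a * monomial K l b = monomial K (k + l) (a * b) :=
  funext fun _ => AddMonoidAlgebra.single_mul_single ..

theorem coeff_monomial_same (k : ℤ) (a : ∀ i, A i) : coeff K k (monomial K k a) = a :=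
  funext fun i => by rw [coeff_apply, monomial_apply, AddMonoidAlgebra.coeff_single,
    Finsupp.single_eq_same]

theorem coeff_monomial_of_ne {k l : ℤ} (h : l ≠ k) (a : ∀ i, A i) :
    coeff K k (monomial K l a) = 0 :=
  funext fun i => by rw [coeff_apply, monomial_apply, AddMonoidAlgebra.coeff_single,
    Finsupp.single_eq_of_ne h.symm, Pi.zero_apply]

theorem monomial_injective (k : ℤ) :
    Function.Injective (monomial K k : (∀ i, A i) → PiLaurent A) :=
  Function.LeftInverse.injective (coeff_monomial_same k)

theorem coeff_mul_monomial (k l : ℤ) (q : PiLaurent A) (b : ∀ i, A i) :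
    coeff K k (q * monomial K l b) = coeff K (k - l) q * b :=
  funext fun _ => AddMonoidAlgebra.coeff_mul_single_eq_coeff_mul _
    fun _ _ => eq_sub_iff_add_eq.symm

theorem monomial_mem_orderGE {m k : ℤ} (h : m ≤ k) (a : ∀ i, A i) :
    monomial K k a ∈ orderGE K m :=
  mem_orderGE.2 fun _ hl => coeff_monomial_of_ne (hl.trans_le h).ne' a

theorem orderGE_antitone : Antitone (orderGE K : ℤ → Submodule K (PiLaurent A)) :=
  fun _ _ hmm' _ hq => mem_orderGE.2 fun k hk => mem_orderGE.1 hq k (hk.trans_le hmm')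

theorem mul_monomial_mem_orderGE_iff {m k : ℤ} {q : PiLaurent A} :
    q * monomial K k 1 ∈ orderGE K (m + k) ↔ q ∈ orderGE K m := by
  simp only [mem_orderGE, coeff_mul_monomial, mul_one]
  refine ⟨fun h l hl => ?_, fun h l hl => h _ (by omega)⟩
  simpa only [add_sub_cancel_right] using h (l + k) (by omega)

theorem mul_mem_orderGE {m m' : ℤ} {q q' : PiLaurent A} (hq : q ∈ orderGE K m)
    (hq' : q' ∈ orderGE K m') : q * q' ∈ orderGE K (m + m') := by
  rw [mem_orderGE] at *
  intro k hk
  funext i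
  rw [coeff_apply, Pi.mul_apply, AddMonoidAlgebra.coeff_mul]
  refine Finset.sum_eq_zero fun l _ => Finset.sum_eq_zero fun l' _ => ?_
  beta_reduce
  split_ifs with hkl
  · rcases lt_or_ge l m with hl | hl
    · exact mul_eq_zero_of_left (congr_fun (hq l hl) i) _
    · exact mul_eq_zero_of_right _ (congr_fun (hq' l' (by omega)) i)
  · rfl

theorem orderGE_mul_orderGE (m m' : ℤ) :
    (orderGE K m * orderGE K m' : Submodule K (PiLaurent A)) = orderGE K (m + m') := by
  refine le_antisymm (Submodule.mul_le.2 fun _ hq _ hq' => mul_mem_orderGE hq hq') fun q hq => ?_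
  have hq_eq : q = q * monomial K (-m') 1 * monomial K m' 1 := by
    rw [mul_assoc, monomial_mul_monomial, neg_add_cancel, mul_one, monomial_zero_one, mul_one]
  rw [hq_eq] at hq ⊢
  exact Submodule.mul_mem_mul (mul_monomial_mem_orderGE_iff.1 hq) (monomial_mem_orderGE le_rfl 1)

section Finite

variable [Finite ι]

variable (K) in
theorem exists_eq_sum_monomial (q : PiLaurent A) :
    ∃ s : Finset ℤ, q = ∑ k ∈ s, monomial K k (coeff K k q) := by
  classical
  have := Fintype.ofFinite ι
  refine ⟨Finset.univ.biUnion fun i => (AddMonoidAlgebra.coeff (q i)).support,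
    ext_coeff (K := K) fun k => ?_⟩
  rw [map_sum, Finset.sum_eq_single k (fun _ _ hl => coeff_monomial_of_ne hl _),
    coeff_monomial_same]
  intro hk
  rw [coeff_monomial_same]
  funext i
  by_contra hi
  exact hk (Finset.mem_biUnion.2 ⟨i, Finset.mem_univ i, Finsupp.mem_support_iff.2 hi⟩)

theorem mem_of_mem_orderGE {S : Type*} [SetLike S (PiLaurent A)]
    [AddSubmonoidClass S (PiLaurent A)] {s : S} {m : ℤ}
    (h : ∀ k, m ≤ k → ∀ a, monomial K k a ∈ s) {q : PiLaurent A} (hq : q ∈ orderGE K m) :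
    q ∈ s := by
  obtain ⟨t, ht⟩ := exists_eq_sum_monomial K q
  rw [ht]
  refine sum_mem fun k _ => ?_
  rcases lt_or_ge k m with hk | hk
  · rw [mem_orderGE.1 hq k hk, map_zero]
    exact zero_mem s
  · exact h k hk _

theorem map_monomial_coeff {κ : Type*} {B : κ → Type*} [∀ j, CommSemiring (B j)]
    [∀ j, Algebra K (B j)] {f : PiLaurent A →+ PiLaurent B}
    (hf : ∀ k a, ∃ b, f (monomial K k a) = monomial K k b) (k : ℤ) (q : PiLaurent A) :
    f (monomial K k (coeff K k q)) = monomial K k (coeff K k (f q)) := by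
  have hmonomial : ∀ l a, f (monomial K k (coeff K k (monomial K l a))) =
      monomial K k (coeff K k (f (monomial K l a))) := by
    intro l a
    obtain ⟨b, hb⟩ := hf l a
    rcases eq_or_ne l k with rfl | hl
    · rw [coeff_monomial_same, hb, coeff_monomial_same]
    · rw [hb, coeff_monomial_of_ne hl, coeff_monomial_of_ne hl, map_zero, map_zero, map_zero]
  obtain ⟨s, hs⟩ := exists_eq_sum_monomial K q
  rw [hs]
  simp only [map_sum, hmonomial]

end Finite

end PiLaurent

section Socle

variable {A : Type*} [CommRing A] [IsLocalRing A]

open IsLocalRing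

theorem exists_mul_ne_zero_and_maximalIdeal_mul_eq_zero [IsArtinianRing A] {a : A} (ha : a ≠ 0) :
    ∃ t : A, t * a ≠ 0 ∧ ∀ m ∈ maximalIdeal A, m * (t * a) = 0 := by
  have hspan : Ideal.span {a} ≠ ⊥ := by rwa [Ne, Ideal.span_singleton_eq_bot]
  obtain ⟨J, hJ, hJa⟩ := (eq_bot_or_exists_atom_le (Ideal.span {a})).resolve_left hspan
  obtain ⟨s, hsJ, hs0⟩ := (Submodule.ne_bot_iff _).1 hJ.1
  obtain ⟨t, rfl⟩ := Ideal.mem_span_singleton'.1 (hJa hsJ)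
  have : IsSimpleModule A J := isSimpleModule_iff_isAtom.2 hJ
  refine ⟨t, hs0, fun m hm => ?_⟩
  rw [← eq_maximalIdeal (IsSimpleModule.annihilator_isMaximal (M := J))] at hm
  exact congr_arg Subtype.val (Module.mem_annihilator.1 hm ⟨_, hsJ⟩)

variable {K : Type*} [CommRing K] [Algebra K A]

theorem finrank_span_singleton_eq_finrank_residueField {s : A} (hs0 : s ≠ 0)
    (hs : ∀ m ∈ maximalIdeal A, m * s = 0) :
    Module.finrank K (Ideal.span {s}) = Module.finrank K (ResidueField A) := by
  have hker : LinearMap.ker (LinearMap.toSpanSingleton A A s) = maximalIdeal A := by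
    refine le_antisymm (le_maximalIdeal fun htop => hs0 ?_) hs
    have hone : (1 : A) ∈ LinearMap.ker (LinearMap.toSpanSingleton A A s) := htop ▸ trivial
    simpa using hone
  have e : ResidueField A ≃ₗ[A] Ideal.span {s} :=
    (Submodule.quotEquivOfEq _ _ hker.symm).trans
      ((LinearMap.toSpanSingleton A A s).quotKerEquivRange.trans
        (LinearEquiv.ofEq _ _ (LinearMap.range_toSpanSingleton s)))
  exact (e.restrictScalars K).finrank_eq.symm

theorem exists_mul_eq_sum_smul_mul {s : A} (hs : ∀ m ∈ maximalIdeal A, m * s = 0) {ι : Type*}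
    [Fintype ι] {e : ι → A} (he : Submodule.span K (Set.range fun k => residue A (e k)) = ⊤)
    (t : A) : ∃ c : ι → K, t * s = ∑ k, c k • (e k * s) := by
  obtain ⟨c, hc⟩ := (Submodule.mem_span_range_iff_exists_fun K).1
    (he ▸ Submodule.mem_top : residue A t ∈ _)
  have hmem : t - ∑ k, c k • e k ∈ maximalIdeal A := by
    rw [← residue_eq_zero_iff, map_sub, ← hc, map_sum, sub_eq_zero]
    refine Finset.sum_congr rfl fun k _ => ?_
    exact (map_smul (IsScalarTower.toAlgHom K A (ResidueField A)) (c k) (e k)).symm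
  refine ⟨c, ?_⟩
  simpa only [sub_mul, sub_eq_zero, Finset.sum_mul, smul_mul_assoc] using hs _ hmem

theorem exists_residue_linearIndependent_span_eq_top (A K : Type*) [CommRing A] [IsLocalRing A]
    [Field K] [Algebra K A] [Module.Finite K A] :
    ∃ (d : ℕ) (e : Fin d → A), LinearIndependent K (fun k => residue A (e k)) ∧
      Submodule.span K (Set.range fun k => residue A (e k)) = ⊤ := by
  have : Module.Finite K (ResidueField A) :=
    Module.Finite.of_surjective
      (IsScalarTower.toAlgHom K A (ResidueField A)).toLinearMap residue_surjective
  let B := Module.finBasis K (ResidueField A)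
  choose e he using fun k => residue_surjective (B k)
  refine ⟨_, e, ?_, ?_⟩
  · simpa only [he] using B.linearIndependent
  · simpa only [he] using B.span_eq

end Socle

namespace ZeroDimSubscheme

open PiLaurent

variable {K : Type*} [Field K] {n : ℕ} {X : ZeroDimSubscheme K n}

/-! ### The image of `R` in `Q^h(R)` -/

theorem mem_Rtilde_iff {q : X.Q} : q ∈ X.Rtilde ↔ q ∈ orderGE K 0 := by
  refine ⟨?_, mem_of_mem_orderGE fun k hk a => ?_⟩
  · rintro ⟨f, rfl⟩
    refine mem_orderGE.2 fun k hk => funext fun p => ?_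
    change AddMonoidAlgebra.coeff (Polynomial.toLaurent (f p)) k = 0
    rw [← Finsupp.notMem_support_iff, LaurentPolynomial.support_coeff_toLaurent]
    simp only [Finset.mem_map, Nat.castEmbedding_apply, not_exists, not_and]
    intro i _ hi
    omega
  · lift k to ℕ using hk
    refine ⟨fun p => Polynomial.C (a p) * Polynomial.X ^ k, funext fun p => ?_⟩
    rw [monomial_apply, LaurentPolynomial.single_eq_C_mul_T]
    exact Polynomial.toLaurent_C_mul_X_pow _ _

theorem mem_orderGE_zero_of_mem_range {q : X.Q} (hq : q ∈ (algebraMap X.R X.Q).range) :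
    q ∈ orderGE K 0 := by
  obtain ⟨f, rfl⟩ := hq
  exact mem_Rtilde_iff.1 (X.algebraMap_mem_Rtilde f)

variable (X) in
/-- The tuple `(F_{p_j})_j` of germs of the dehomogenization of `F` at the points of `𝕏`. -/
def germs (F : MvPolynomial (Fin (n + 1)) K) : ∀ p, X.O p := fun p => X.germ p F

theorem algebraMap_mk_of_isHomogeneous {F : MvPolynomial (Fin (n + 1)) K} {i : ℕ}
    (hF : F.IsHomogeneous i) :
    algebraMap X.R X.Q (Ideal.Quotient.mk X.ideal F) = monomial K i (X.germs F) :=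
  funext fun p => (X.iotaP_of_isHomogeneous hF p).trans
    (LaurentPolynomial.single_eq_C_mul_T _ _).symm

theorem coeff_algebraMap_mk (F : MvPolynomial (Fin (n + 1)) K) (i : ℕ) :
    coeff K i (algebraMap X.R X.Q (Ideal.Quotient.mk X.ideal F)) =
      X.germs (MvPolynomial.homogeneousComponent i F) := by
  have hcomp := fun j => MvPolynomial.homogeneousComponent_isHomogeneous j F
  conv_lhs => rw [← MvPolynomial.sum_homogeneousComponent F]
  simp only [map_sum, algebraMap_mk_of_isHomogeneous (hcomp _)]
  rw [Finset.sum_eq_single i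
    (fun j _ hj => coeff_monomial_of_ne (by exact_mod_cast hj) _), coeff_monomial_same]
  intro hi
  rw [coeff_monomial_same, MvPolynomial.homogeneousComponent_eq_zero _ _ (by simpa using hi)]
  exact funext fun p => map_zero (X.germ p)

theorem exists_mem_Rgr_of_mem_range {q : X.Q} (hq : q ∈ (algebraMap X.R X.Q).range) (i : ℕ) :
    ∃ f ∈ X.Rgr i, algebraMap X.R X.Q f = monomial K i (coeff K i q) := by
  obtain ⟨f, rfl⟩ := hq
  obtain ⟨F, rfl⟩ := Ideal.Quotient.mk_surjective f
  have hF := MvPolynomial.homogeneousComponent_isHomogeneous i F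
  exact ⟨_, ⟨_, hF, rfl⟩,
    (algebraMap_mk_of_isHomogeneous hF).trans (by rw [coeff_algebraMap_mk])⟩

theorem algebraMap_x0_pow (i : ℕ) : algebraMap X.R X.Q (X.x0 ^ i) = monomial K i 1 := by
  have hX0 : (MvPolynomial.X 0 ^ i : MvPolynomial (Fin (n + 1)) K).IsHomogeneous i := by
    simpa only [one_mul] using (MvPolynomial.isHomogeneous_X K (0 : Fin (n + 1))).pow i
  refine (algebraMap_mk_of_isHomogeneous hX0).trans (congr_arg _ (funext fun p => ?_))
  rw [germs, map_pow, X.germ_X0, one_pow, Pi.one_apply]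

/-! ### Dehomogenized homogeneous components of `R` -/

variable (X) in
/-- The dehomogenization of `R_i`: the `K`-space of all `(a_j)_j ∈ ∏_j 𝒪_{𝕏,p_j}` such that
`(a_j T_j^i)_j ∈ R`. -/
def dehomog (i : ℕ) : Submodule K (∀ p, X.O p) :=
  (LinearMap.range X.iota.toLinearMap).comap (monomial K i)

theorem mem_dehomog {i : ℕ} {a : ∀ p, X.O p} :
    a ∈ X.dehomog i ↔ (monomial K i a : X.Q) ∈ (algebraMap X.R X.Q).range := Iff.rfl

theorem coeff_mem_dehomog {q : X.Q} (hq : q ∈ (algebraMap X.R X.Q).range) (i : ℕ) :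
    coeff K i q ∈ X.dehomog i := by
  obtain ⟨f, -, hf⟩ := exists_mem_Rgr_of_mem_range hq i
  exact mem_dehomog.2 ⟨f, hf⟩

theorem dehomog_mono : Monotone X.dehomog := by
  intro i j hij a ha
  have hmul := mul_mem (mem_dehomog.1 ha) ⟨X.x0 ^ (j - i), rfl⟩
  rwa [algebraMap_x0_pow, monomial_mul_monomial, mul_one, ← Nat.cast_add,
    Nat.add_sub_cancel' hij] at hmul

theorem map_monomial_dehomog (i : ℕ) :
    ((X.dehomog i).map (monomial K i) : Submodule K X.Q) =
      (X.Rgr i).map X.iota.toLinearMap := by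
  ext q
  constructor
  · rintro ⟨a, ha, rfl⟩
    obtain ⟨f, hf, hfa⟩ := exists_mem_Rgr_of_mem_range (mem_dehomog.1 ha) i
    exact ⟨f, hf, hfa.trans (by rw [coeff_monomial_same])⟩
  · rintro ⟨_, ⟨F, hF, rfl⟩, rfl⟩
    have hFq := algebraMap_mk_of_isHomogeneous (X := X) hF
    exact ⟨_, mem_dehomog.2 ⟨_, hFq⟩, hFq.symm⟩

theorem finrank_dehomog (i : ℕ) :
    Module.finrank K (X.dehomog i) = Module.finrank K (X.Rgr i) := by
  rw [((X.dehomog i).equivMapOfInjective _ (monomial_injective i)).finrank_eq,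
    map_monomial_dehomog, ← ((X.Rgr i).equivMapOfInjective _ X.iota_injective).finrank_eq]

instance (p : X.Supp) : Module.Finite K (X.O p) := by
  classical
  refine Module.Finite.of_surjective (IsScalarTower.toAlgHom K X.Gam (X.O p)).toLinearMap
    fun a => ?_
  obtain ⟨b, hb⟩ := X.toPi_bijective.2 (Pi.single p a)
  exact ⟨b, (congr_fun hb p).trans (Pi.single_eq_same p a)⟩

instance (p : X.Supp) : IsArtinianRing (X.O p) := IsArtinianRing.of_finite K (X.O p)

theorem finrank_pi_O : Module.finrank K (∀ p, X.O p) = X.deg := by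
  have := Fintype.ofFinite X.Supp
  rw [Module.finrank_pi_fintype, deg, finsum_eq_sum_of_fintype]

theorem exists_mem_dehomog (a : ∀ p, X.O p) : ∃ i, a ∈ X.dehomog i := by
  obtain ⟨b, rfl⟩ := X.toPi_bijective.2 a
  obtain ⟨d, F, hF, rfl⟩ := X.exists_form b
  exact ⟨d, mem_dehomog.2 ⟨_, algebraMap_mk_of_isHomogeneous hF⟩⟩

theorem exists_dehomog_eq_top : ∃ i, X.dehomog i = ⊤ := by
  obtain ⟨N, hN⟩ := monotone_stabilizes_iff_noetherian.2
    (inferInstanceAs (IsNoetherian K (∀ p, X.O p))) ⟨X.dehomog, dehomog_mono⟩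
  refine ⟨N, eq_top_iff.2 fun a _ => ?_⟩
  obtain ⟨i, hi⟩ := exists_mem_dehomog a
  exact (hN _ (le_max_right i N)).symm.le (dehomog_mono (le_max_left i N) hi)

theorem finrank_Rgr_of_rX_le {i : ℕ} (hi : X.rX ≤ i) : Module.finrank K (X.Rgr i) = X.deg := by
  have hne : {i : ℕ | ∀ j, i ≤ j → Module.finrank K (X.Rgr j) = X.deg}.Nonempty := by
    obtain ⟨N, hN⟩ := exists_dehomog_eq_top (X := X)
    refine ⟨N, fun j hj => ?_⟩
    have htop : X.dehomog j = ⊤ := top_le_iff.1 (hN ▸ dehomog_mono hj)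
    rw [← finrank_dehomog, htop, finrank_top, finrank_pi_O]
  exact Nat.sInf_mem hne i hi

theorem dehomog_eq_top {i : ℕ} (hi : X.rX ≤ i) : X.dehomog i = ⊤ :=
  Submodule.eq_top_of_finrank_eq <| by
    rw [finrank_dehomog, finrank_Rgr_of_rX_le hi, finrank_pi_O]

theorem map_iSup_Rgr_eq_orderGE {m : ℕ} (hm : X.rX ≤ m) :
    (⨆ (i : ℕ) (_ : m ≤ i), X.Rgr i).map X.iota.toLinearMap = orderGE K (m : ℤ) := by
  simp only [Submodule.map_iSup, ← map_monomial_dehomog]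
  refine le_antisymm (iSup₂_le fun i hi => ?_) fun q => mem_of_mem_orderGE fun k hk a => ?_
  · rintro _ ⟨a, -, rfl⟩
    exact monomial_mem_orderGE (Int.ofNat_le.2 hi) a
  · lift k to ℕ using (Int.natCast_nonneg m).trans hk
    have hmk : m ≤ k := Int.ofNat_le.1 hk
    refine Submodule.mem_iSup_of_mem k (Submodule.mem_iSup_of_mem hmk ⟨a, ?_, rfl⟩)
    rw [dehomog_eq_top (hm.trans hmk)]
    exact Submodule.mem_top

theorem mem_range_of_mem_orderGE {q : X.Q} (hq : q ∈ orderGE K (X.rX : ℤ)) :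
    q ∈ (algebraMap X.R X.Q).range := by
  rw [← map_iSup_Rgr_eq_orderGE le_rfl] at hq
  obtain ⟨f, -, hf⟩ := hq
  exact ⟨f, hf⟩

/-! ### Separators and the Cayley–Bacharach property -/

theorem isMaximalSubscheme_span_singleton {p : X.Supp} {s : X.O p} (hs0 : s ≠ 0)
    (hs : ∀ m ∈ IsLocalRing.maximalIdeal (X.O p), m * s = 0) :
    X.IsMaximalSubscheme p (Ideal.span {s}) := by
  rw [IsMaximalSubscheme, ← finrank_span_singleton_eq_finrank_residueField hs0 hs]
  exact ((Ideal.span {s}).restrictScalars K).finrank_quotient_add_finrank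

open Classical in
theorem single_eq_monomial (p : X.Supp) (a : X.O p) (k : ℤ) :
    (Pi.single p (LaurentPolynomial.C a * LaurentPolynomial.T k) : X.Q) =
      monomial K k (Pi.single p a) := by
  funext p'
  rcases eq_or_ne p' p with rfl | hp
  · rw [monomial_apply, Pi.single_eq_same, Pi.single_eq_same, LaurentPolynomial.single_eq_C_mul_T]
  · rw [monomial_apply, Pi.single_eq_of_ne hp, Pi.single_eq_of_ne hp,
      AddMonoidAlgebra.single_zero]

open Classical in
theorem mu_le_iff {p : X.Supp} {a : X.O p} {i : ℕ} :
    X.mu p a ≤ i ↔ Pi.single p a ∈ X.dehomog i := by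
  have hmu : X.mu p a = sInf {i : ℕ | Pi.single p a ∈ X.dehomog i} := by
    simp only [mu, single_eq_monomial, mem_dehomog]
  rw [hmu]
  refine ⟨fun h => dehomog_mono h ?_, fun h => Nat.sInf_le h⟩
  exact Nat.sInf_mem (s := {i : ℕ | Pi.single p a ∈ X.dehomog i}) (exists_mem_dehomog _)

open Classical in
theorem IsMaxSeparatorDegree.exists_forall_single_mem_dehomog {p : X.Supp} {b : Ideal (X.O p)}
    {m : ℕ} (hm : X.IsMaxSeparatorDegree p b m) :
    ∃ s ≠ 0, ∀ t, Pi.single p (t * s) ∈ X.dehomog m := by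
  obtain ⟨s, d, e, ⟨hs0, hs, -⟩, -, hspan, rfl⟩ := hm
  refine ⟨s, hs0, fun t => ?_⟩
  obtain ⟨c, hc⟩ := exists_mul_eq_sum_smul_mul hs hspan t
  rw [hc, ← LinearMap.single_apply (R := K) (φ := X.O), map_sum]
  refine sum_mem fun k _ => ?_
  rw [map_smul]
  exact Submodule.smul_mem _ _
    (mu_le_iff.1 (Finset.le_sup (f := fun k => X.mu p (e k * s)) (Finset.mem_univ k)))

open Classical in
theorem exists_isMaxSeparatorDegree_le {p : X.Supp} {a : X.O p} (ha : a ≠ 0) {i : ℕ}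
    (hai : ∀ t, Pi.single p (t * a) ∈ X.dehomog i) :
    ∃ m ≤ i, ∃ b, X.IsMaximalSubscheme p b ∧ X.IsMaxSeparatorDegree p b m := by
  obtain ⟨t, hta0, hta⟩ := exists_mul_ne_zero_and_maximalIdeal_mul_eq_zero ha
  obtain ⟨d, e, hlin, hspan⟩ := exists_residue_linearIndependent_span_eq_top (X.O p) K
  refine ⟨_, Finset.sup_le fun k _ => mu_le_iff.2 ?_, Ideal.span {t * a},
    isMaximalSubscheme_span_singleton hta0 hta, t * a, d, e, ⟨hta0, hta, rfl⟩, hlin, hspan, rfl⟩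
  rw [← mul_assoc]
  exact hai _

open Classical in
theorem degPt_le_iff {p : X.Supp} {i : ℕ} :
    X.degPt p ≤ i ↔ ∃ a ≠ 0, ∀ t, Pi.single p (t * a) ∈ X.dehomog i := by
  constructor
  · intro hi
    have hne : {m : ℕ | ∃ b : Ideal (X.O p),
        X.IsMaximalSubscheme p b ∧ X.IsMaxSeparatorDegree p b m}.Nonempty := by
      obtain ⟨N, hN⟩ := exists_dehomog_eq_top (X := X)
      obtain ⟨m, -, hm⟩ := exists_isMaxSeparatorDegree_le (one_ne_zero (α := X.O p))
        fun t => hN ▸ Submodule.mem_top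
      exact ⟨m, hm⟩
    obtain ⟨b, -, hdeg⟩ := Nat.sInf_mem hne
    obtain ⟨s, hs0, hs⟩ := hdeg.exists_forall_single_mem_dehomog
    exact ⟨s, hs0, fun t => dehomog_mono hi (hs t)⟩
  · rintro ⟨a, ha, hai⟩
    obtain ⟨m, hmi, hm⟩ := exists_isMaxSeparatorDegree_le ha hai
    exact (Nat.sInf_le hm).trans hmi

/-! ### The conductor -/

theorem orderGE_le_conductor : orderGE K (X.rX : ℤ) ≤ X.conductor.restrictScalars K := by
  refine fun f hf => ⟨mem_Rtilde_iff.2 (orderGE_antitone (Int.natCast_nonneg _) hf),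
    fun g hg => mem_range_of_mem_orderGE ?_⟩
  simpa only [add_zero] using mul_mem_orderGE hf (mem_Rtilde_iff.1 hg)

theorem coeff_mul_mem_dehomog {f : X.Q} (hf : f ∈ X.conductor) (i : ℕ) (b : ∀ p, X.O p) :
    coeff K i f * b ∈ X.dehomog i := by
  have hfb := hf.2 (monomial K 0 b) (mem_Rtilde_iff.2 (monomial_mem_orderGE le_rfl b))
  simpa only [coeff_mul_monomial, sub_zero] using coeff_mem_dehomog hfb i

theorem monomial_mem_conductor {i : ℕ} {a : ∀ p, X.O p} (ha : ∀ b, a * b ∈ X.dehomog i) :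
    (monomial K i a : X.Q) ∈ X.conductor := by
  refine ⟨mem_Rtilde_iff.2 (monomial_mem_orderGE (Int.natCast_nonneg i) a), fun g hg => ?_⟩
  refine mem_of_mem_orderGE (s := (LinearMap.range X.iota.toLinearMap).comap
    (LinearMap.mulLeft K (monomial K i a))) (fun k hk b => ?_) (mem_Rtilde_iff.1 hg)
  lift k to ℕ using hk
  rw [Submodule.mem_comap, LinearMap.mulLeft_apply, monomial_mul_monomial, ← Nat.cast_add]
  exact dehomog_mono (Nat.le_add_right i k) (ha b)

theorem cayleyBacharach_iff_conductor_le :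
    X.CayleyBacharach ↔ X.conductor.restrictScalars K ≤ orderGE K (X.rX : ℤ) := by
  classical
  constructor
  · refine fun hCB f hf => mem_orderGE.2 fun k hk => ?_
    rcases lt_or_ge k 0 with hk0 | hk0
    · exact mem_orderGE.1 (mem_Rtilde_iff.1 hf.1) k hk0
    lift k to ℕ using hk0
    by_contra hne
    obtain ⟨p, hp⟩ := Function.ne_iff.1 hne
    refine ((Int.ofNat_lt.1 hk).trans_le (hCB p)).not_ge (degPt_le_iff.2 ⟨_, hp, fun t => ?_⟩)
    rw [mul_comm, Pi.single_mul_right]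
    exact coeff_mul_mem_dehomog hf k _
  · refine fun hle p => not_lt.1 fun hlt => ?_
    obtain ⟨a, ha0, ha⟩ := degPt_le_iff.1 (le_refl (X.degPt p))
    have hmem : (monomial K (X.degPt p : ℤ) (Pi.single p a) : X.Q) ∈ X.conductor :=
      monomial_mem_conductor fun b => by
        rw [← Pi.single_mul_left, mul_comm]
        exact ha _
    have hcoeff := mem_orderGE.1 (hle hmem) _ (Int.ofNat_lt.2 hlt)
    rw [coeff_monomial_same] at hcoeff
    exact ha0 (Pi.single_eq_zero_iff.1 hcoeff)

theorem CayleyBacharach.conductor_sq (hCB : X.CayleyBacharach) :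
    (X.conductor ^ 2).restrictScalars K = orderGE K (2 * X.rX : ℤ) := by
  have hconductor : X.conductor.restrictScalars K = orderGE K (X.rX : ℤ) :=
    le_antisymm (cayleyBacharach_iff_conductor_le.1 hCB) orderGE_le_conductor
  rw [Submodule.restrictScalars_pow two_ne_zero, hconductor, pow_two, orderGE_mul_orderGE, two_mul]

/-! ### The Dedekind different -/

theorem monomial_one_mem_L0 (k : ℤ) : (monomial K k 1 : X.Q) ∈ X.L0 := by
  rcases Int.le_total 0 k with hk | hk
  · lift k to ℕ using hk
    rw [← algebraMap_x0_pow, map_pow]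
    exact pow_mem (Algebra.subset_adjoin (Set.mem_insert _ _)) k
  · obtain ⟨k, rfl⟩ := Int.exists_eq_neg_ofNat hk
    have hpow : (monomial K (-k) 1 : X.Q) = X.x0inv ^ k := by
      funext p
      rw [monomial_apply, Pi.pow_apply, x0inv, LaurentPolynomial.T_pow, mul_neg_one]
      rfl
    have hmem : X.x0inv ∈ X.L0 :=
      Algebra.subset_adjoin (Set.mem_insert_of_mem _ (Set.mem_singleton _))
    rw [hpow]
    exact pow_mem hmem k

variable {σ : X.Q →ₗ[X.L0] X.L0}

theorem IsTraceMap.coe_apply_monomial_coeff (hσ : X.IsTraceMap σ) (k : ℤ) (q : X.Q) :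
    (σ (monomial K k (coeff K k q)) : X.Q) = monomial K k (coeff K k (σ q : X.Q)) := by
  refine map_monomial_coeff
    (f := (X.L0.val.toLinearMap ∘ₗ σ.restrictScalars K).toAddMonoidHom) (fun k a => ?_) k q
  have ha : (monomial K k a : X.Q) ∈ X.Qgr k :=
    fun p => ⟨a p, LaurentPolynomial.single_eq_C_mul_T _ _⟩
  choose b hb using hσ.degree_zero k _ ha
  exact ⟨b, funext fun p => (hb p).trans (LaurentPolynomial.single_eq_C_mul_T _ _).symm⟩

theorem IsTraceMap.eq_zero_of_forall_apply_mul_monomial_zero (hσ : X.IsTraceMap σ) {q : X.Q}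
    (hq : ∀ b, σ (q * monomial K 0 b) = 0) : q = 0 := by
  refine hσ.basis.1 (LinearMap.ext fun q' => ?_)
  change σ (q * q') = σ (0 * q')
  obtain ⟨s, hs⟩ := exists_eq_sum_monomial K q'
  rw [zero_mul, map_zero, hs, Finset.mul_sum, map_sum]
  refine Finset.sum_eq_zero fun k _ => ?_
  have hsmul : q * monomial K k (coeff K k q') =
      (⟨_, monomial_one_mem_L0 k⟩ : X.L0) • (q * monomial K 0 (coeff K k q')) := by
    change _ = monomial K k 1 * _
    rw [mul_left_comm, monomial_mul_monomial, one_mul, add_zero]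
  rw [hsmul, map_smul, hq, smul_zero]

theorem IsTraceMap.mem_orderGE_of_forall_apply_mul_monomial_zero (hσ : X.IsTraceMap σ) {m : ℤ}
    {q : X.Q} (hq : ∀ b, (σ (q * monomial K 0 b) : X.Q) ∈ orderGE K m) : q ∈ orderGE K m := by
  refine mem_orderGE.2 fun k hk => monomial_injective (K := K) k ?_
  rw [map_zero]
  refine hσ.eq_zero_of_forall_apply_mul_monomial_zero fun b => Subtype.ext ?_
  have hcomp := hσ.coe_apply_monomial_coeff k (q * monomial K 0 b)
  rw [mem_orderGE.1 (hq b) k hk, map_zero, coeff_mul_monomial, sub_zero] at hcomp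
  rwa [monomial_mul_monomial, add_zero]

theorem IsTraceMap.mem_orderGE_of_mem_complementary (hσ : X.IsTraceMap σ) {g : X.Q}
    (hg : g ∈ X.complementary σ) : g ∈ orderGE K (-X.rX : ℤ) := by
  obtain ⟨φ, hφ⟩ := hg
  rw [← mul_monomial_mem_orderGE_iff (k := X.rX), neg_add_cancel]
  refine hσ.mem_orderGE_of_forall_apply_mul_monomial_zero fun b => ?_
  obtain ⟨f, hf⟩ := mem_range_of_mem_orderGE (X := X) (monomial_mem_orderGE le_rfl b)
  have hσf : (σ (g * algebraMap X.R X.Q f) : X.Q) = algebraMap X.R X.Q (φ f) := hφ f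
  rw [mul_assoc, monomial_mul_monomial, one_mul, add_zero, ← hf, hσf]
  exact mem_orderGE_zero_of_mem_range ⟨_, rfl⟩

theorem IsTraceMap.conductor_mul_mem_different (hσ : X.IsTraceMap σ) {f q : X.Q}
    (hf : f ∈ X.conductor) (hq : q ∈ orderGE K (X.rX : ℤ)) : f * q ∈ X.different σ := by
  intro g hg
  have hqg := mul_mem_orderGE hq (hσ.mem_orderGE_of_mem_complementary hg)
  rw [add_neg_cancel] at hqg
  rw [mul_assoc]
  exact hf.2 _ (mem_Rtilde_iff.2 hqg)

theorem minimalDedekindDifferent_iff : X.MinimalDedekindDifferent σ ↔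
    (X.different σ).restrictScalars K = orderGE K (2 * X.rX : ℤ) := by
  rw [MinimalDedekindDifferent, map_iSup_Rgr_eq_orderGE (by omega), Nat.cast_mul, Nat.cast_two]

theorem MinimalDedekindDifferent.cayleyBacharach (h : X.MinimalDedekindDifferent σ)
    (hσ : X.IsTraceMap σ) : X.CayleyBacharach := by
  refine cayleyBacharach_iff_conductor_le.2 fun f hf => ?_
  have hmem : f * monomial K X.rX 1 ∈ (X.different σ).restrictScalars K :=
    hσ.conductor_mul_mem_different hf (monomial_mem_orderGE le_rfl 1)
  rwa [minimalDedekindDifferent_iff.1 h, two_mul, mul_monomial_mem_orderGE_iff] at hmem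

end ZeroDimSubscheme

end

/-- A `0`-dimensional locally Gorenstein scheme has minimal Dedekind different iff it is a
Cayley–Bacharach scheme and the square of its conductor is the Dedekind different. -/
theorem dedekind_CB_stmt11 {K : Type*} [Field K] {n : ℕ} (X : ZeroDimSubscheme K n)
    (hX : X.LocallyGorenstein) (σ : X.Q →ₗ[X.L0] X.L0) (hσ : X.IsTraceMap σ) :
    X.MinimalDedekindDifferent σ ↔
      X.CayleyBacharach ∧ X.conductor ^ 2 = X.different σ := by
  constructor
  · intro h
    have hCB := h.cayleyBacharach hσ
    refine ⟨hCB, Submodule.restrictScalars_injective K X.R X.Q ?_⟩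
    rw [hCB.conductor_sq, ZeroDimSubscheme.minimalDedekindDifferent_iff.1 h]
  · rintro ⟨hCB, hsq⟩
    rw [ZeroDimSubscheme.minimalDedekindDifferent_iff, ← hsq, hCB.conductor_sq]
end
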